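/- arXiv:1804.03467 — 3 statements merged into one kernel-verified Lean document; each statement's English description precedes it below -/
import Mathlib

section
/- For every 0 < p < ∞, the sequence (Δ_n(p))_{n≥2} converges as n → ∞, and its limit Δ(p) equals (1/4) · ( 2√π · Γ(p+1) / ( √e · Γ(p+1/2) ) )^{1/p}. -/
open MeasureTheory Filter Finset
open scoped ENNReal

/-- `log Δ_n(p)`: the supremum over all `0 ≤ t_1 ≤ … ≤ t_n` of
`(2/(n(n-1))) Σ_{i<j} log|t_i - t_j| - (1/p) log((1/n) Σ t_i^p)`.
Tuples with a repeated entry give the value `-∞` and hence do not contribute to the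
supremum, so we may equivalently take the supremum over strictly increasing nonnegative
tuples. -/
noncomputable def logDeltaN (p : ℝ) (n : ℕ) : ℝ :=
  sSup { r : ℝ | ∃ t : Fin n → ℝ, (∀ i, 0 ≤ t i) ∧ StrictMono t ∧
    r = (2 / (n * (n - 1) : ℝ)) * (∑ i, ∑ j, if i < j then Real.log |t i - t j| else 0)
      - (1 / p) * Real.log ((1 / n : ℝ) * ∑ i, t i ^ p) }

/-- `Δ_n(p)`, defined by `log Δ_n(p) = logDeltaN p n`. -/
noncomputable def DeltaN (p : ℝ) (n : ℕ) : ℝ := Real.exp (logDeltaN p n)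

/-!
Write `B` for the beta value `B(p, 1/2)`. Scaling `t` so that `log u ≤ u - 1` becomes an equality
turns the scale-invariant ratio defining `Δ_n(p)` into the weighted energy
`∑_{i<j} log |t_i - t_j| - B ∑ t_i ^ p`, so it suffices to know the maximum of the latter up to
`o(n ^ 2)`. The constant `B` is the one for which `∫ g (x / s ^ (1 / p)) ds = B x ^ p` over
`0 < s < ∞`, where `g` is the Green function of `[0, 1]`.

Upper bound: the Vandermonde determinant is unchanged if the column of degree `j` is replaced by the
values of any monic polynomial of degree `j`. Take products of Chebyshev polynomials of degree `m`
(the last factor possibly of smaller degree) on the intervals `[0, (m (k + 1)) ^ (1 / p)]`. Their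
size at `x` is governed by a sum of Green functions, and writing a Green function as the integral
of `1 / (b √(1 - b))` over `1 / y < b < 1` bounds this sum by `B x ^ p`, because at most
`(x b) ^ p / m` of the intervals have their right end point below `x b`. The factors `2` of the
Chebyshev polynomials cost `log 2 / m`, and `m` is arbitrary.

Lower bound: add the points one at a time. Given `k` points, average
`∑ log |x - t_i| - B x ^ p` over `x = A (1 + Re z) / 2` with `z` on the unit circle and
`A ^ p = k`. Jensen's inequality bounds the average of the logarithms below by `k log (A / 4)`,
and the average of `B x ^ p` is `k / p`, so some new point does at least as well.
-/

/-! ### Monic Chebyshev polynomials of intervals -/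

/-- The Green function of the interval `[0, 1]` with pole at infinity. -/
noncomputable def greenUnit (y : ℝ) : ℝ := Real.arcosh (max 1 |2 * y - 1|)

theorem greenUnit_nonneg (y : ℝ) : 0 ≤ greenUnit y := Real.arcosh_nonneg (le_max_left _ _)

theorem greenUnit_of_le_one {y : ℝ} (h0 : 0 ≤ y) (h1 : y ≤ 1) : greenUnit y = 0 := by
  rw [greenUnit, max_eq_left (abs_le.mpr ⟨by linarith, by linarith⟩), Real.arcosh_zero]

theorem greenUnit_of_one_le {y : ℝ} (hy : 1 ≤ y) : greenUnit y = Real.arcosh (2 * y - 1) := by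
  rw [greenUnit, abs_of_nonneg (by linarith), max_eq_right (by linarith)]

theorem abs_eval_chebyshev_T_abs (n : ℤ) (x : ℝ) :
    |(Polynomial.Chebyshev.T ℝ n).eval (|x|)| = |(Polynomial.Chebyshev.T ℝ n).eval x| := by
  rcases abs_choice x with h | h
  · rw [h]
  · rw [h, Polynomial.Chebyshev.T_eval_neg, abs_mul]
    rcases Int.units_eq_one_or (Int.negOnePow n) with h | h <;> simp [h]

theorem abs_eval_chebyshev_T_le (m : ℕ) (x : ℝ) :
    |(Polynomial.Chebyshev.T ℝ m).eval x| ≤ Real.exp (m * Real.arcosh (max 1 |x|)) := by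
  rcases le_total |x| 1 with h | h
  · rw [max_eq_left h, Real.arcosh_zero, mul_zero, Real.exp_zero]
    exact Polynomial.Chebyshev.abs_eval_T_real_le_one _ h
  · rw [max_eq_right h, ← abs_eval_chebyshev_T_abs]
    nth_rewrite 1 [← Real.cosh_arcosh h]
    rw [Polynomial.Chebyshev.T_real_cosh, Int.cast_natCast, abs_of_pos (Real.cosh_pos _),
      ← Real.cosh_add_sinh, le_add_iff_nonneg_right, Real.sinh_nonneg_iff]
    exact mul_nonneg m.cast_nonneg (Real.arcosh_nonneg h)

/-- The monic Chebyshev polynomial of degree `m` of the interval `[0, a]`, for `0 < m` and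
`0 < a`. -/
noncomputable def monicChebyshev (m : ℕ) (a : ℝ) : Polynomial ℝ :=
  Polynomial.C (2 * (a / 4) ^ m) *
    (Polynomial.Chebyshev.T ℝ m).comp (Polynomial.C (2 / a) * Polynomial.X + Polynomial.C (-1))

theorem natDegree_monicChebyshev (m : ℕ) {a : ℝ} (ha : 0 < a) :
    (monicChebyshev m a).natDegree = m := by
  rw [monicChebyshev, Polynomial.natDegree_C_mul (by positivity), Polynomial.natDegree_comp,
    Polynomial.natDegree_linear (by positivity), Polynomial.Chebyshev.natDegree_T, mul_one,
    Int.natAbs_natCast]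

theorem monic_monicChebyshev {m : ℕ} (hm : m ≠ 0) {a : ℝ} (ha : 0 < a) :
    (monicChebyshev m a).Monic := by
  have h_scale : a / 4 * 2 * (2 / a) = 1 := by field_simp; norm_num
  obtain ⟨k, rfl⟩ := Nat.exists_eq_succ_of_ne_zero hm
  rw [Polynomial.Monic, monicChebyshev, Polynomial.leadingCoeff_mul, Polynomial.leadingCoeff_C,
    Polynomial.leadingCoeff_comp (by rw [Polynomial.natDegree_linear (by positivity)]; simp),
    Polynomial.leadingCoeff_linear (by positivity), Polynomial.Chebyshev.leadingCoeff_T,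
    Polynomial.Chebyshev.natDegree_T, Int.natAbs_natCast, Nat.succ_sub_one]
  calc 2 * (a / 4) ^ (k + 1) * (2 ^ k * (2 / a) ^ (k + 1))
      = (a / 4 * 2 * (2 / a)) ^ (k + 1) := by rw [mul_pow, mul_pow]; ring
    _ = 1 := by rw [h_scale, one_pow]

theorem abs_eval_monicChebyshev_le (m : ℕ) {a : ℝ} (ha : 0 < a) (x : ℝ) :
    |(monicChebyshev m a).eval x| ≤ 2 * (a / 4) ^ m * Real.exp (m * greenUnit (x / a)) := by
  have h_eval : (Polynomial.C (2 / a) * Polynomial.X + Polynomial.C (-1)).eval x =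
      2 * (x / a) - 1 := by
    simp only [Polynomial.eval_add, Polynomial.eval_mul, Polynomial.eval_C, Polynomial.eval_X]
    ring
  rw [monicChebyshev, Polynomial.eval_mul, Polynomial.eval_C, Polynomial.eval_comp, h_eval,
    abs_mul, abs_of_pos (by positivity)]
  gcongr
  exact abs_eval_chebyshev_T_le m _

theorem exists_monic_abs_eval_le_exp_greenUnit (m : ℕ) {a : ℝ} (ha : 0 < a) :
    ∃ Q : Polynomial ℝ, Q.Monic ∧ Q.natDegree = m ∧
      ∀ x, |Q.eval x| ≤ 2 * (a / 4) ^ m * Real.exp (m * greenUnit (x / a)) := by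
  rcases eq_or_ne m 0 with rfl | hm
  · exact ⟨1, Polynomial.monic_one, Polynomial.natDegree_one, fun x => by simp⟩
  · exact ⟨monicChebyshev m a, monic_monicChebyshev hm ha, natDegree_monicChebyshev m ha,
      abs_eval_monicChebyshev_le m ha⟩

/-! ### Sums of Green functions -/

theorem re_cpow_mul_one_sub_cpow (α β : ℝ) {x : ℝ} (h0 : 0 ≤ x) (h1 : x ≤ 1) :
    ((x : ℂ) ^ ((α : ℂ) - 1) * (1 - (x : ℂ)) ^ ((β : ℂ) - 1)).re =
      x ^ (α - 1) * (1 - x) ^ (β - 1) := by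
  rw [← Complex.ofReal_one, ← Complex.ofReal_sub, ← Complex.ofReal_sub, ← Complex.ofReal_sub,
    ← Complex.ofReal_cpow h0, ← Complex.ofReal_cpow (sub_nonneg.mpr h1), ← Complex.ofReal_mul,
    Complex.ofReal_re]

theorem integrableOn_Ioc_betaIntegrand {α β : ℝ} (hα : 0 < α) (hβ : 0 < β) :
    IntegrableOn (fun x : ℝ => (x : ℂ) ^ ((α : ℂ) - 1) * (1 - (x : ℂ)) ^ ((β : ℂ) - 1))
      (Set.Ioc 0 1) :=
  (intervalIntegrable_iff_integrableOn_Ioc_of_le zero_le_one).mp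
    (Complex.betaIntegral_convergent (by simpa) (by simpa))

theorem integrableOn_rpow_mul_one_sub_rpow {α β : ℝ} (hα : 0 < α) (hβ : 0 < β) :
    IntegrableOn (fun x : ℝ => x ^ (α - 1) * (1 - x) ^ (β - 1)) (Set.Ioc 0 1) :=
  IntegrableOn.congr_fun (integrableOn_Ioc_betaIntegrand hα hβ).re
    (fun _ hx => re_cpow_mul_one_sub_cpow α β hx.1.le hx.2) measurableSet_Ioc

theorem integral_rpow_mul_one_sub_rpow {α β : ℝ} (hα : 0 < α) (hβ : 0 < β) :
    ∫ x in Set.Ioc (0 : ℝ) 1, x ^ (α - 1) * (1 - x) ^ (β - 1) = ProbabilityTheory.beta α β := by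
  rw [ProbabilityTheory.beta_eq_betaIntegralReal α β hα hβ, Complex.betaIntegral,
    intervalIntegral.integral_of_le zero_le_one, ← setIntegral_congr_fun measurableSet_Ioc
      fun x hx => re_cpow_mul_one_sub_cpow α β hx.1.le hx.2]
  exact integral_re (integrableOn_Ioc_betaIntegrand hα hβ)

/-- The density `1 / (b √(1 - b))` on `(0, 1)`, whose mass above the level `1 / y` is
`greenUnit y`. -/
noncomputable def greenDensity (b : ℝ) : ℝ := 1 / (b * √(1 - b))

theorem greenDensity_nonneg {b : ℝ} (hb : 0 ≤ b) : 0 ≤ greenDensity b := by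
  unfold greenDensity; positivity

theorem rpow_mul_greenDensity (p : ℝ) {b : ℝ} (hb : 0 < b) (hb' : b ≤ 1) :
    b ^ p * greenDensity b = b ^ (p - 1) * (1 - b) ^ ((1 / 2 : ℝ) - 1) := by
  have h_sqrt : (√(1 - b))⁻¹ = (1 - b) ^ ((1 / 2 : ℝ) - 1) := by
    rw [Real.sqrt_eq_rpow, ← Real.rpow_neg (sub_nonneg.mpr hb')]
    norm_num
  rw [greenDensity, ← h_sqrt, Real.rpow_sub_one hb.ne']
  ring

theorem hasDerivAt_neg_arcosh_two_div_sub_one {b : ℝ} (hb : 0 < b) (hb' : b < 1) :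
    HasDerivAt (fun b => -Real.arcosh (2 / b - 1)) (greenDensity b) b := by
  have h_pos : 0 < 1 - b := sub_pos.mpr hb'
  have h_gt : 1 < 2 / b - 1 := by rw [lt_sub_iff_add_lt, lt_div_iff₀ hb]; linarith
  have h_inner : HasDerivAt (fun b : ℝ => 2 / b - 1) (2 * (-(b ^ 2)⁻¹)) b := by
    simpa [div_eq_mul_inv] using ((hasDerivAt_inv hb.ne').const_mul 2).sub_const 1
  have h_sqrt : √((2 / b - 1) ^ 2 - 1) = 2 * √(1 - b) / b := by
    rw [show (2 / b - 1) ^ 2 - 1 = (2 / b) ^ 2 * (1 - b) by field_simp; ring,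
      Real.sqrt_mul (sq_nonneg _), Real.sqrt_sq (by positivity)]
    ring
  refine ((Real.hasDerivAt_arcosh h_gt).comp b h_inner).neg.congr_deriv ?_
  rw [h_sqrt, greenDensity]
  field_simp

theorem continuousOn_neg_arcosh_two_div_sub_one {a : ℝ} (ha : 0 < a) :
    ContinuousOn (fun b => -Real.arcosh (2 / b - 1)) (Set.Icc a 1) := by
  refine (Real.continuousOn_arcosh.comp ?_ fun b hb => ?_).neg
  · exact (continuousOn_const.div continuousOn_id fun b hb => (ha.trans_le hb.1).ne').sub
      continuousOn_const
  · rw [Set.mem_Ici, le_sub_iff_add_le, le_div_iff₀ (ha.trans_le hb.1)]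
    linarith [hb.2]

theorem integrableOn_greenDensity {a : ℝ} (ha : 0 < a) :
    IntegrableOn greenDensity (Set.Ioc a 1) :=
  intervalIntegral.integrableOn_deriv_of_nonneg (continuousOn_neg_arcosh_two_div_sub_one ha)
    (fun _ hb => hasDerivAt_neg_arcosh_two_div_sub_one (ha.trans hb.1) hb.2)
    fun _ hb => greenDensity_nonneg (ha.trans hb.1).le

theorem integral_greenDensity {a : ℝ} (ha : 0 < a) :
    ∫ b in Set.Ioc a 1, greenDensity b = greenUnit (1 / a) := by
  rcases le_total a 1 with h | h
  · rw [← intervalIntegral.integral_of_le h, intervalIntegral.integral_eq_sub_of_hasDerivAt_of_le h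
      (continuousOn_neg_arcosh_two_div_sub_one ha)
      (fun b hb => hasDerivAt_neg_arcosh_two_div_sub_one (ha.trans hb.1) hb.2)
      ((intervalIntegrable_iff_integrableOn_Ioc_of_le h).mpr (integrableOn_greenDensity ha)),
      greenUnit_of_one_le ((one_le_div ha).mpr h)]
    norm_num [Real.arcosh_zero, div_eq_mul_inv]
  · rw [Set.Ioc_eq_empty h.not_gt, Measure.restrict_empty, integral_zero_measure,
      greenUnit_of_le_one (by positivity) ((div_le_one ha).mpr h)]

theorem Ioc_inter_setOf_one_lt_mul {y : ℝ} (hy : 0 < y) :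
    Set.Ioc 0 1 ∩ {b | 1 < y * b} = Set.Ioc (1 / y) 1 := by
  ext b
  simp only [Set.mem_inter_iff, Set.mem_Ioc, Set.mem_ofPred_eq, div_lt_iff₀' hy]
  exact ⟨fun hb => ⟨hb.2, hb.1.2⟩, fun hb =>
    ⟨⟨pos_of_mul_pos_right (zero_lt_one.trans hb.1) hy.le, hb.2⟩, hb.1⟩⟩

theorem integrableOn_indicator_greenDensity {y : ℝ} (hy : 0 < y) :
    IntegrableOn ({b | 1 < y * b}.indicator greenDensity) (Set.Ioc 0 1) := by
  have h_meas : MeasurableSet {b : ℝ | 1 < y * b} :=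
    measurableSet_lt measurable_const (measurable_const_mul y)
  rw [IntegrableOn, integrable_indicator_iff h_meas, IntegrableOn,
    Measure.restrict_restrict h_meas, Set.inter_comm, Ioc_inter_setOf_one_lt_mul hy]
  exact integrableOn_greenDensity (one_div_pos.mpr hy)

theorem integral_indicator_greenDensity {y : ℝ} (hy : 0 < y) :
    ∫ b in Set.Ioc 0 1, {b | 1 < y * b}.indicator greenDensity b = greenUnit y := by
  rw [setIntegral_indicator (measurableSet_lt measurable_const (measurable_const_mul y)),
    Ioc_inter_setOf_one_lt_mul hy, integral_greenDensity (one_div_pos.mpr hy), one_div_one_div]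

theorem card_filter_rpow_lt_le {p : ℝ} (hp : 0 < p) (K : ℕ) {x : ℝ} (hx : 0 ≤ x) :
    (#{k ∈ range K | ((k : ℕ) + 1 : ℝ) ^ (1 / p) < x} : ℝ) ≤ x ^ p := by
  have h_subset : {k ∈ range K | ((k : ℕ) + 1 : ℝ) ^ (1 / p) < x} ⊆ range ⌊x ^ p⌋₊ := by
    intro k hk
    rw [mem_filter, one_div, Real.rpow_inv_lt_iff_of_pos (by positivity) hx hp] at hk
    rw [mem_range, ← Nat.succ_le_iff, Nat.le_floor_iff (by positivity), Nat.cast_succ]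
    exact hk.2.le
  calc (#{k ∈ range K | ((k : ℕ) + 1 : ℝ) ^ (1 / p) < x} : ℝ)
      ≤ ⌊x ^ p⌋₊ := by exact_mod_cast (card_le_card h_subset).trans_eq (card_range _)
    _ ≤ x ^ p := Nat.floor_le (by positivity)

theorem sum_greenUnit_le {p : ℝ} (hp : 0 < p) (K : ℕ) {x : ℝ} (hx : 0 ≤ x) :
    ∑ k ∈ range K, greenUnit (x / ((k : ℝ) + 1) ^ (1 / p)) ≤
      ProbabilityTheory.beta p (1 / 2) * x ^ p := by
  rcases hx.eq_or_lt with rfl | hx_pos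
  · simp [greenUnit_of_le_one, Real.zero_rpow hp.ne']
  set y : ℕ → ℝ := fun k => x / ((k : ℝ) + 1) ^ (1 / p) with hy
  have hy_pos (k : ℕ) : 0 < y k := by positivity
  have h_le : ∀ b ∈ Set.Ioc (0 : ℝ) 1, ∑ k ∈ range K, {b | 1 < y k * b}.indicator greenDensity b ≤
      b ^ (p - 1) * (1 - b) ^ ((1 / 2 : ℝ) - 1) * x ^ p := by
    rintro b ⟨hb0, hb1⟩
    have h_card := card_filter_rpow_lt_le hp K (mul_nonneg hx hb0.le)
    simp only [Set.indicator_apply, Set.mem_ofPred_eq]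
    calc ∑ k ∈ range K, (if 1 < y k * b then greenDensity b else 0)
        = #{k ∈ range K | ((k : ℕ) + 1 : ℝ) ^ (1 / p) < x * b} * greenDensity b := by
          rw [← sum_filter, sum_const, nsmul_eq_mul]
          have h_iff (k : ℕ) : 1 < y k * b ↔ ((k : ℝ) + 1) ^ (1 / p) < x * b := by
            rw [hy, div_mul_eq_mul_div, one_lt_div (by positivity)]
          simp only [h_iff]
      _ ≤ (x * b) ^ p * greenDensity b := by
          gcongr
          exact greenDensity_nonneg hb0.le
      _ = b ^ (p - 1) * (1 - b) ^ ((1 / 2 : ℝ) - 1) * x ^ p := by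
          rw [Real.mul_rpow hx hb0.le, mul_assoc, rpow_mul_greenDensity p hb0 hb1, mul_comm]
  calc ∑ k ∈ range K, greenUnit (y k)
      = ∫ b in Set.Ioc 0 1, ∑ k ∈ range K, {b | 1 < y k * b}.indicator greenDensity b := by
        rw [integral_finsetSum _ fun k _ => integrableOn_indicator_greenDensity (hy_pos k)]
        exact sum_congr rfl fun k _ => (integral_indicator_greenDensity (hy_pos k)).symm
    _ ≤ ∫ b in Set.Ioc (0 : ℝ) 1, b ^ (p - 1) * (1 - b) ^ ((1 / 2 : ℝ) - 1) * x ^ p :=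
        setIntegral_mono_on
          (integrable_finsetSum _ fun k _ => integrableOn_indicator_greenDensity (hy_pos k))
          ((integrableOn_rpow_mul_one_sub_rpow hp one_half_pos).mul_const _) measurableSet_Ioc h_le
    _ = ProbabilityTheory.beta p (1 / 2) * x ^ p := by
        rw [integral_mul_const, integral_rpow_mul_one_sub_rpow hp one_half_pos]

theorem exists_monic_abs_eval_le_prod_exp_greenUnit {ι : Type*} (s : Finset ι) (d : ι → ℕ)
    {a : ι → ℝ} (ha : ∀ k, 0 < a k) :
    ∃ Q : Polynomial ℝ, Q.Monic ∧ Q.natDegree = ∑ k ∈ s, d k ∧ ∀ x, |Q.eval x| ≤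
      ∏ k ∈ s, 2 * (a k / 4) ^ d k * Real.exp (d k * greenUnit (x / a k)) := by
  choose Q h_monic h_deg h_le using fun k => exists_monic_abs_eval_le_exp_greenUnit (d k) (ha k)
  refine ⟨∏ k ∈ s, Q k, Polynomial.monic_prod_of_monic _ _ fun k _ => h_monic k, ?_, fun x => ?_⟩
  · rw [Polynomial.natDegree_prod_of_monic _ _ fun k _ => h_monic k]
    exact sum_congr rfl fun k _ => h_deg k
  · rw [Polynomial.eval_prod, abs_prod]
    exact prod_le_prod (fun k _ => abs_nonneg _) fun k _ => h_le k x

theorem card_filter_div_eq_le {m : ℕ} (hm : 0 < m) (s : Finset ℕ) (k : ℕ) :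
    #{i ∈ s | i / m = k} ≤ m := by
  have h_subset : {i ∈ s | i / m = k} ⊆ Ico (m * k) (m * k + m) := fun i hi => by
    have h_mod := Nat.mod_lt i hm
    have h_div := Nat.div_add_mod i m
    rw [(mem_filter.mp hi).2] at h_div
    exact mem_Ico.mpr (by omega)
  simpa using card_le_card h_subset

theorem chebyshev_block_bound_le_exp {p : ℝ} (hp : 0 < p) {m k : ℕ} (hm : 0 < m)
    (s : Finset ℕ) (x : ℝ) :
    2 * ((m * (k + 1) : ℝ) ^ (1 / p) / 4) ^ #{i ∈ s | i / m = k} *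
        Real.exp (#{i ∈ s | i / m = k} * greenUnit (x / (m * (k + 1) : ℝ) ^ (1 / p))) ≤
      Real.exp (Real.log 2 + ∑ i ∈ s with i / m = k, (1 / p * Real.log (i + m) - Real.log 4) +
        m * greenUnit (x / (m * (k + 1) : ℝ) ^ (1 / p))) := by
  have h_pos : (0 : ℝ) < m * (k + 1) := by positivity
  have h_sum : #{i ∈ s | i / m = k} * (1 / p * Real.log (m * (k + 1)) - Real.log 4) ≤
      ∑ i ∈ s with i / m = k, (1 / p * Real.log (i + m) - Real.log 4) := by
    rw [← nsmul_eq_mul]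
    refine card_nsmul_le_sum _ _ _ fun i hi => ?_
    have h_block : m * (k + 1) ≤ i + m := by
      rw [← (mem_filter.mp hi).2, mul_add_one]
      gcongr
      exact Nat.mul_div_le i m
    have : (m * (k + 1) : ℝ) ≤ i + m := by exact_mod_cast h_block
    gcongr
  have h_base : (m * (k + 1) : ℝ) ^ (1 / p) / 4 =
      Real.exp (1 / p * Real.log (m * (k + 1)) - Real.log 4) := by
    rw [Real.exp_sub, Real.exp_log four_pos, Real.rpow_def_of_pos h_pos, mul_comm (1 / p)]
  rw [h_base, ← Real.exp_nat_mul]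
  nth_rewrite 1 [← Real.exp_log two_pos]
  rw [← Real.exp_add, ← Real.exp_add]
  gcongr
  · exact greenUnit_nonneg _
  · exact card_filter_div_eq_le hm s k

theorem exists_monic_abs_eval_le_exp_rpow {p : ℝ} (hp : 0 < p) {m : ℕ} (hm : 0 < m) (j : ℕ) :
    ∃ P : Polynomial ℝ, P.Monic ∧ P.natDegree = j ∧ ∀ x, 0 ≤ x → |P.eval x| ≤
      Real.exp ((j / m + 1 : ℕ) * Real.log 2 +
        ∑ i ∈ range j, (1 / p * Real.log (i + m) - Real.log 4) +
        ProbabilityTheory.beta p (1 / 2) * x ^ p) := by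
  set s := range (j / m + 1)
  have h_maps : ∀ i ∈ range j, i / m ∈ s := fun i hi =>
    mem_range_succ_iff.mpr (Nat.div_le_div_right (mem_range.mp hi).le)
  obtain ⟨P, h_monic, h_deg, h_le⟩ := exists_monic_abs_eval_le_prod_exp_greenUnit s
    (fun k => #{i ∈ range j | i / m = k}) (a := fun k => (m * (k + 1) : ℝ) ^ (1 / p))
    (fun k => by positivity)
  refine ⟨P, h_monic, ?_, fun x hx => (h_le x).trans ?_⟩
  · rw [h_deg, ← card_eq_sum_card_fiberwise h_maps, card_range]
  have h_green : ∑ k ∈ s, m * greenUnit (x / (m * (k + 1) : ℝ) ^ (1 / p)) ≤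
      ProbabilityTheory.beta p (1 / 2) * x ^ p := by
    have h_scale (k : ℕ) : x / (m * (k + 1) : ℝ) ^ (1 / p) =
        x / (m : ℝ) ^ (1 / p) / ((k : ℝ) + 1) ^ (1 / p) := by
      rw [Real.mul_rpow (by positivity) (by positivity), div_div]
    have h_rpow : (m : ℝ) * (x / (m : ℝ) ^ (1 / p)) ^ p = x ^ p := by
      rw [Real.div_rpow hx (by positivity), ← Real.rpow_mul (by positivity),
        one_div_mul_cancel hp.ne', Real.rpow_one]
      field_simp
    rw [← mul_sum, sum_congr rfl fun k _ => by rw [h_scale k], ← h_rpow, mul_left_comm]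
    gcongr
    exact sum_greenUnit_le hp _ (by positivity)
  calc ∏ k ∈ s, _
      ≤ ∏ k ∈ s, Real.exp (Real.log 2 +
          ∑ i ∈ range j with i / m = k, (1 / p * Real.log (i + m) - Real.log 4) +
          m * greenUnit (x / (m * (k + 1) : ℝ) ^ (1 / p))) :=
        prod_le_prod (fun k _ => by positivity) fun k _ =>
          chebyshev_block_bound_le_exp hp hm (range j) x
    _ = Real.exp ((j / m + 1 : ℕ) * Real.log 2 +
          ∑ i ∈ range j, (1 / p * Real.log (i + m) - Real.log 4) +
          ∑ k ∈ s, m * greenUnit (x / (m * (k + 1) : ℝ) ^ (1 / p))) := by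
        rw [← Real.exp_sum, sum_add_distrib, sum_add_distrib, sum_const, card_range, nsmul_eq_mul,
          sum_fiberwise_of_maps_to h_maps]
    _ ≤ _ := by gcongr

/-! ### Logarithmic energy -/

theorem norm_det_le_factorial_mul_prod {ι R : Type*} [Fintype ι] [DecidableEq ι] [NormedCommRing R]
    [NormOneClass R] {A : Matrix ι ι R} {u v : ι → ℝ} (h : ∀ i j, ‖A i j‖ ≤ u i * v j) :
    ‖A.det‖ ≤ (Fintype.card ι).factorial * ((∏ i, u i) * ∏ j, v j) := by
  have h_term (σ : Equiv.Perm ι) :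
      ‖Equiv.Perm.sign σ • ∏ i, A (σ i) i‖ ≤ (∏ i, u i) * ∏ j, v j :=
    calc ‖Equiv.Perm.sign σ • ∏ i, A (σ i) i‖
        = ‖∏ i, A (σ i) i‖ := norm_units_zsmul _ _
      _ ≤ ∏ i, ‖A (σ i) i‖ := Finset.norm_prod_le _ _
      _ ≤ ∏ i, u (σ i) * v i := prod_le_prod (fun _ _ => norm_nonneg _) fun i _ => h (σ i) i
      _ = (∏ i, u i) * ∏ j, v j := by rw [prod_mul_distrib, Equiv.prod_comp σ u]
  calc ‖A.det‖
      ≤ ∑ σ : Equiv.Perm ι, ‖Equiv.Perm.sign σ • ∏ i, A (σ i) i‖ := by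
        rw [Matrix.det_apply]
        exact norm_sum_le _ _
    _ ≤ ∑ _σ : Equiv.Perm ι, (∏ i, u i) * ∏ j, v j := sum_le_sum fun σ _ => h_term σ
    _ = (Fintype.card ι).factorial * ((∏ i, u i) * ∏ j, v j) := by
        rw [sum_const, card_univ, Fintype.card_perm, nsmul_eq_mul]

/-- The discrete logarithmic energy `∑_{i<j} log |t_i - t_j|`. -/
noncomputable def logVandermonde {n : ℕ} (t : Fin n → ℝ) : ℝ :=
  ∑ i, ∑ j, if i < j then Real.log |t i - t j| else 0

theorem logVandermonde_eq_sum_Ioi {n : ℕ} (t : Fin n → ℝ) :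
    logVandermonde t = ∑ i, ∑ j ∈ Ioi i, Real.log |t i - t j| :=
  sum_congr rfl fun i _ => by rw [← sum_filter, filter_lt_eq_Ioi]

theorem logVandermonde_eq_log_abs_det {n : ℕ} {t : Fin n → ℝ} (ht : Function.Injective t) :
    logVandermonde t = Real.log |(Matrix.vandermonde t).det| := by
  have h_ne (i : Fin n) : ∀ j ∈ Ioi i, |t j - t i| ≠ 0 := fun j hj =>
    abs_ne_zero.mpr (sub_ne_zero.mpr (ht.ne (mem_Ioi.mp hj).ne'))
  rw [Matrix.det_vandermonde, abs_prod, Real.log_prod, logVandermonde_eq_sum_Ioi]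
  · refine sum_congr rfl fun i _ => ?_
    rw [abs_prod, Real.log_prod (h_ne i)]
    exact sum_congr rfl fun j _ => by rw [abs_sub_comm]
  · intro i _
    rw [abs_prod]
    exact prod_ne_zero_iff.mpr (h_ne i)

theorem logVandermonde_le {n : ℕ} {s : Set ℝ} {F : Fin n → ℝ} {w : ℝ → ℝ}
    {P : Fin n → Polynomial ℝ} (h_monic : ∀ j, (P j).Monic) (h_deg : ∀ j, (P j).natDegree = j)
    (hP : ∀ j, ∀ x ∈ s, |(P j).eval x| ≤ Real.exp (F j + w x))
    {t : Fin n → ℝ} (hts : ∀ i, t i ∈ s) (ht : Function.Injective t) :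
    logVandermonde t ≤ Real.log n.factorial + ∑ j, F j + ∑ i, w (t i) := by
  have h_det := norm_det_le_factorial_mul_prod (A := .of fun i j => (P j).eval (t i))
    (u := fun i => Real.exp (w (t i))) (v := fun j => Real.exp (F j)) fun i j => by
      rw [← Real.exp_add, add_comm]
      exact hP j _ (hts i)
  rw [← Matrix.det_eval_matrixOfPolynomials_eq_det_vandermonde t P h_deg h_monic, Fintype.card_fin,
    ← Real.exp_sum, ← Real.exp_sum, Real.norm_eq_abs] at h_det
  calc logVandermonde t
      = Real.log |(Matrix.vandermonde t).det| := logVandermonde_eq_log_abs_det ht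
    _ ≤ Real.log (n.factorial * (Real.exp (∑ i, w (t i)) * Real.exp (∑ j, F j))) :=
        Real.log_le_log (abs_pos.mpr (Matrix.det_vandermonde_ne_zero_iff.mpr ht)) h_det
    _ = Real.log n.factorial + ∑ j, F j + ∑ i, w (t i) := by
        rw [Real.log_mul (by positivity) (by positivity), Real.log_mul (by positivity)
          (by positivity), Real.log_exp, Real.log_exp]
        ring

-- The diagonal terms vanish because `Real.log 0 = 0`.
theorem two_mul_logVandermonde {n : ℕ} (t : Fin n → ℝ) :
    2 * logVandermonde t = ∑ i, ∑ j, Real.log |t i - t j| := by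
  have h_symm : logVandermonde t = ∑ i, ∑ j, if j < i then Real.log |t i - t j| else 0 := by
    rw [logVandermonde, sum_comm]
    simp only [abs_sub_comm]
  rw [two_mul]
  nth_rewrite 2 [h_symm]
  rw [logVandermonde, ← sum_add_distrib]
  refine sum_congr rfl fun i _ => ?_
  rw [← sum_add_distrib]
  refine sum_congr rfl fun j _ => ?_
  rcases lt_trichotomy i j with h | rfl | h
  · simp [h, h.le]
  · simp
  · simp [h, h.le]

theorem logVandermonde_smul {n : ℕ} {t : Fin n → ℝ} (ht : Function.Injective t) {a : ℝ}
    (ha : 0 < a) :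
    logVandermonde (a • t) = n * (n - 1) / 2 * Real.log a + logVandermonde t := by
  have h_row (i : Fin n) : ∑ j, Real.log |(a • t) i - (a • t) j| =
      (n - 1) * Real.log a + ∑ j, Real.log |t i - t j| := by
    have h_log : ∀ j ∈ univ.erase i, Real.log |(a • t) i - (a • t) j| =
        Real.log a + Real.log |t i - t j| := fun j hj => by
      have h_ne : t i - t j ≠ 0 := sub_ne_zero.mpr (ht.ne (ne_of_mem_erase hj).symm)
      rw [Pi.smul_apply, Pi.smul_apply, ← smul_sub, smul_eq_mul, abs_mul, abs_of_pos ha,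
        Real.log_mul ha.ne' (abs_ne_zero.mpr h_ne)]
    rw [← sum_erase (a := i) univ (by simp), ← sum_erase (a := i) univ (by simp),
      sum_congr rfl h_log, sum_add_distrib, sum_const, card_erase_of_mem (mem_univ i),
      card_univ, Fintype.card_fin, nsmul_eq_mul, Nat.cast_pred (Fin.pos i)]
  have h_smul := two_mul_logVandermonde (a • t)
  rw [sum_congr rfl fun i _ => h_row i, sum_add_distrib, ← two_mul_logVandermonde, sum_const,
    card_univ, Fintype.card_fin, nsmul_eq_mul] at h_smul
  linarith

theorem sum_rpow_pos {ι : Type*} [Fintype ι] [Nontrivial ι] (p : ℝ) {t : ι → ℝ}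
    (ht0 : ∀ i, 0 ≤ t i) (ht : Function.Injective t) : 0 < ∑ i, t i ^ p := by
  obtain ⟨i, hi⟩ := ht.exists_ne 0
  exact sum_pos' (fun j _ => Real.rpow_nonneg (ht0 j) p)
    ⟨i, mem_univ i, Real.rpow_pos_of_pos ((ht0 i).lt_of_ne' hi) p⟩

/-- The logarithm of the ratio whose supremum over strictly increasing nonnegative tuples
is `DeltaN p n`. -/
noncomputable def logRatio (p : ℝ) {n : ℕ} (t : Fin n → ℝ) : ℝ :=
  2 / (n * (n - 1)) * logVandermonde t - 1 / p * Real.log (1 / n * ∑ i, t i ^ p)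

theorem logRatio_smul {p : ℝ} (hp : p ≠ 0) {n : ℕ} (hn : 2 ≤ n) {t : Fin n → ℝ}
    (ht0 : ∀ i, 0 ≤ t i) (ht : Function.Injective t) {a : ℝ} (ha : 0 < a) :
    logRatio p (a • t) = logRatio p t := by
  have : Nontrivial (Fin n) := Fin.nontrivial_iff_two_le.mpr hn
  have h_sum := sum_rpow_pos p ht0 ht
  have hn1 : (n : ℝ) - 1 ≠ 0 := by
    have : (2 : ℝ) ≤ n := by exact_mod_cast hn
    linarith
  have h_rpow : 1 / n * ∑ i, (a • t) i ^ p = a ^ p * (1 / n * ∑ i, t i ^ p) := by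
    simp only [Pi.smul_apply, smul_eq_mul, Real.mul_rpow ha.le (ht0 _), ← mul_sum]
    ring
  rw [logRatio, logRatio, logVandermonde_smul ht ha, h_rpow, Real.log_mul (by positivity)
    (by positivity), Real.log_rpow ha]
  field_simp
  ring

/-- The discrete logarithmic energy in the external field `c x ^ p`. -/
noncomputable def weightedEnergy (c p : ℝ) {n : ℕ} (t : Fin n → ℝ) : ℝ :=
  logVandermonde t - c * ∑ i, t i ^ p

theorem logRatio_eq_weightedEnergy_add {c p : ℝ} (hc : 0 < c) (hp : 0 < p) {n : ℕ} (hn : 2 ≤ n)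
    {t : Fin n → ℝ} (ht0 : ∀ i, 0 ≤ t i) (ht : Function.Injective t) :
    logRatio p t = 2 / (n * (n - 1)) * weightedEnergy c p t +
      1 / p * (1 + Real.log (p * c) - Real.log ((n - 1) / 2)) +
      1 / p * (p * c / ((n - 1) / 2) * (1 / n * ∑ i, t i ^ p) - 1 -
        Real.log (p * c / ((n - 1) / 2) * (1 / n * ∑ i, t i ^ p))) := by
  have : Nontrivial (Fin n) := Fin.nontrivial_iff_two_le.mpr hn
  have h_sum := sum_rpow_pos p ht0 ht
  have hn1 : (0 : ℝ) < n - 1 := sub_pos.mpr (by exact_mod_cast hn)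
  have h_log : Real.log (p * c / ((n - 1) / 2) * (1 / n * ∑ i, t i ^ p)) =
      Real.log (p * c) - Real.log ((n - 1) / 2) + Real.log (1 / n * ∑ i, t i ^ p) := by
    rw [Real.log_mul (by positivity) (by positivity), Real.log_div (by positivity) (by positivity)]
  rw [logRatio, weightedEnergy, h_log]
  field_simp
  ring

theorem weightedEnergy_le_logRatio {c p : ℝ} (hc : 0 < c) (hp : 0 < p) {n : ℕ} (hn : 2 ≤ n)
    {t : Fin n → ℝ} (ht0 : ∀ i, 0 ≤ t i) (ht : Function.Injective t) :
    2 / (n * (n - 1)) * weightedEnergy c p t +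
      1 / p * (1 + Real.log (p * c) - Real.log ((n - 1) / 2)) ≤ logRatio p t := by
  have : Nontrivial (Fin n) := Fin.nontrivial_iff_two_le.mpr hn
  have h_sum := sum_rpow_pos p ht0 ht
  have hn1 : (0 : ℝ) < n - 1 := sub_pos.mpr (by exact_mod_cast hn)
  rw [logRatio_eq_weightedEnergy_add hc hp hn ht0 ht, le_add_iff_nonneg_right]
  exact mul_nonneg (by positivity) (sub_nonneg.mpr (Real.log_le_sub_one_of_pos (by positivity)))

theorem exists_smul_weightedEnergy_eq_logRatio {c p : ℝ} (hc : 0 < c) (hp : 0 < p) {n : ℕ}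
    (hn : 2 ≤ n) {t : Fin n → ℝ} (ht0 : ∀ i, 0 ≤ t i) (ht : Function.Injective t) :
    ∃ a : ℝ, 0 < a ∧ 2 / (n * (n - 1)) * weightedEnergy c p (a • t) +
      1 / p * (1 + Real.log (p * c) - Real.log ((n - 1) / 2)) = logRatio p t := by
  have : Nontrivial (Fin n) := Fin.nontrivial_iff_two_le.mpr hn
  have h_sum := sum_rpow_pos p ht0 ht
  have hn1 : (0 : ℝ) < n - 1 := sub_pos.mpr (by exact_mod_cast hn)
  set u := (p * c / ((n - 1) / 2) * (1 / n * ∑ i, t i ^ p))⁻¹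
  have hu_pos : 0 < u := by positivity
  have ha_pos : 0 < u ^ (1 / p) := by positivity
  have h_one : p * c / ((n - 1) / 2) * (1 / n * ∑ i, (u ^ (1 / p) • t) i ^ p) = 1 := by
    have h_rpow (i : Fin n) : (u ^ (1 / p) • t) i ^ p = u * t i ^ p := by
      rw [Pi.smul_apply, smul_eq_mul, Real.mul_rpow ha_pos.le (ht0 i), ← Real.rpow_mul hu_pos.le,
        one_div_mul_cancel hp.ne', Real.rpow_one]
    rw [sum_congr rfl fun i _ => h_rpow i, ← mul_sum, mul_left_comm _ u, mul_left_comm _ u]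
    exact inv_mul_cancel₀ (by positivity)
  refine ⟨u ^ (1 / p), ha_pos, ?_⟩
  rw [← logRatio_smul hp.ne' hn ht0 ht ha_pos, logRatio_eq_weightedEnergy_add hc hp hn
    (t := u ^ (1 / p) • t) (fun i => mul_nonneg ha_pos.le (ht0 i))
    ((smul_right_injective ℝ ha_pos.ne').comp ht), h_one, Real.log_one,
    sub_self, sub_self, mul_zero, add_zero]

/-! ### Greedy choice of points -/

theorem exists_circleAverage_le {f : ℂ → ℝ} (hf : CircleIntegrable f 0 1) {N : Set ℂ}
    (hN : N.Countable) : ∃ z : ℂ, ‖z‖ = 1 ∧ z ∉ N ∧ Real.circleAverage f 0 1 ≤ f z := by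
  set μ := volume.restrict (Set.uIoc 0 (2 * Real.pi)) with hμ
  rw [Set.uIoc_of_le Real.two_pi_pos.le] at hμ
  have h_finite : IsFiniteMeasure μ := by rw [hμ]; infer_instance
  have h_ne : μ ≠ 0 := by
    rw [hμ, Ne, Measure.restrict_eq_zero]
    simp [Real.pi_pos]
  have h_null : μ (circleMap 0 1 ⁻¹' N) = 0 :=
    (hN.preimage_circleMap 0 one_ne_zero).measure_zero _
  obtain ⟨θ, hθ, h⟩ := exists_notMem_null_average_le h_ne (intervalIntegrable_iff.mp hf) h_null
  exact ⟨circleMap 0 1 θ, by simp, hθ, by rwa [Real.circleAverage_eq_intervalAverage]⟩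

-- Mahler's form of Jensen's inequality: on average, `log ‖P‖` is at least its value for the
-- leading monomial.
theorem exists_log_norm_leadingCoeff_add_le {P : Polynomial ℂ} (hP : P ≠ 0) {f : ℂ → ℝ}
    (hf : CircleIntegrable f 0 1) :
    ∃ z : ℂ, ‖z‖ = 1 ∧ P.eval z ≠ 0 ∧ Real.log ‖P.leadingCoeff‖ + f z ≤
      Real.log ‖P.eval z‖ + Real.circleAverage f 0 1 := by
  have h_int : CircleIntegrable (fun z => Real.log ‖P.eval z‖) 0 1 :=
    P.intervalIntegrable_mahlerMeasure
  obtain ⟨z, hz, h_root, h_le⟩ := exists_circleAverage_le (h_int.sub hf)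
    (P.finite_setOfPred_isRoot hP).countable
  have h_mahler : Real.log ‖P.leadingCoeff‖ ≤ P.logMahlerMeasure := by
    rw [Polynomial.logMahlerMeasure_eq_log_MahlerMeasure]
    exact Real.log_le_log (by simpa using hP) P.leadingCoeff_le_mahlerMeasure
  rw [Real.circleAverage_sub h_int hf, ← Polynomial.logMahlerMeasure_def] at h_le
  refine ⟨z, hz, h_root, ?_⟩
  simp only [Pi.sub_apply] at h_le
  linarith

/-- The monic polynomial with `|P z| = 2 |Re z - c|` on the unit circle. -/
noncomputable def rePolynomial (c : ℝ) : Polynomial ℂ :=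
  Polynomial.X ^ 2 + (1 - Polynomial.C (2 * c : ℂ) * Polynomial.X)

theorem monic_rePolynomial (c : ℝ) : (rePolynomial c).Monic := by
  unfold rePolynomial
  monicity!

theorem norm_eval_rePolynomial (c : ℝ) {z : ℂ} (hz : ‖z‖ = 1) :
    ‖(rePolynomial c).eval z‖ = 2 * |z.re - c| := by
  have h_conj : z * (starRingEnd ℂ) z = 1 := by
    rw [Complex.mul_conj, Complex.normSq_eq_norm_sq, hz]
    simp
  have h_re : z + (starRingEnd ℂ) z = 2 * z.re := by
    rw [Complex.add_conj]
    push_cast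
    ring
  have h_eval : (rePolynomial c).eval z = z * ((2 * (z.re - c) : ℝ) : ℂ) := by
    simp only [rePolynomial, Polynomial.eval_add, Polynomial.eval_sub, Polynomial.eval_pow,
      Polynomial.eval_mul, Polynomial.eval_X, Polynomial.eval_C, Polynomial.eval_one]
    push_cast
    linear_combination z * h_re - h_conj
  rw [h_eval, norm_mul, hz, one_mul, Complex.norm_real, Real.norm_eq_abs, abs_mul, abs_two]

theorem abs_scaled_re_sub {A : ℝ} (hA : 0 < A) (t : ℝ) {z : ℂ} (hz : ‖z‖ = 1) :
    |A * ((1 + z.re) / 2) - t| = A / 4 * ‖(rePolynomial (2 * t / A - 1)).eval z‖ := by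
  rw [norm_eval_rePolynomial _ hz, ← mul_assoc, ← abs_of_pos (by positivity : 0 < A / 4 * 2),
    ← abs_mul]
  congr 1
  field_simp
  ring

theorem exists_sum_log_abs_sub_ge (s : Finset ℝ) {A : ℝ} (hA : 0 < A) {w : ℝ → ℝ}
    (hw : Continuous w) :
    ∃ x, 0 ≤ x ∧ x ∉ s ∧ #s * Real.log (A / 4) + w x ≤ ∑ t ∈ s, Real.log |x - t| +
      Real.circleAverage (fun z => w (A * ((1 + z.re) / 2))) 0 1 := by
  set P := ∏ t ∈ s, rePolynomial (2 * t / A - 1)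
  have h_monic : P.Monic := Polynomial.monic_prod_of_monic _ _ fun t _ => monic_rePolynomial _
  have h_cont : Continuous fun z : ℂ => w (A * ((1 + z.re) / 2)) := by fun_prop
  obtain ⟨z, hz, h_ne, h_le⟩ := exists_log_norm_leadingCoeff_add_le h_monic.ne_zero
    h_cont.continuousOn.circleIntegrable'
  have h_re : -1 ≤ z.re := (abs_le.mp (hz ▸ Complex.abs_re_le_norm z)).1
  have h_factor : ∀ t ∈ s, ‖(rePolynomial (2 * t / A - 1)).eval z‖ ≠ 0 := by
    rw [Polynomial.eval_prod, prod_ne_zero_iff] at h_ne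
    exact fun t ht => norm_ne_zero_iff.mpr (h_ne t ht)
  refine ⟨A * ((1 + z.re) / 2), mul_nonneg hA.le (by linarith), fun h_mem => ?_, ?_⟩
  · have h_zero := abs_scaled_re_sub hA (A * ((1 + z.re) / 2)) hz
    rw [sub_self, abs_zero] at h_zero
    exact mul_ne_zero (by positivity) (h_factor _ h_mem) h_zero.symm
  · have h_log : ∑ t ∈ s, Real.log |A * ((1 + z.re) / 2) - t| =
        #s * Real.log (A / 4) + Real.log ‖P.eval z‖ := by
      rw [Polynomial.eval_prod, norm_prod, Real.log_prod h_factor, ← nsmul_eq_mul, ← sum_const,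
        ← sum_add_distrib]
      refine sum_congr rfl fun t ht => ?_
      rw [abs_scaled_re_sub hA t hz, Real.log_mul (by positivity) (h_factor t ht)]
    rw [h_monic.leadingCoeff, norm_one, Real.log_one, zero_add] at h_le
    linarith

theorem circleAverage_comp_re {f : ℝ → ℝ} (hf : Continuous f) :
    Real.circleAverage (fun z => f z.re) 0 1 =
      Real.pi⁻¹ * ∫ x, f x ∂Polynomial.Chebyshev.measureT := by
  have h_re (θ : ℝ) : (circleMap 0 1 θ).re = Real.cos θ := by
    rw [circleMap_zero, Complex.ofReal_one, one_mul, Complex.exp_ofReal_mul_I_re]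
  have h_int (a b : ℝ) : IntervalIntegrable (fun θ => f (Real.cos θ)) volume a b :=
    (hf.comp Real.continuous_cos).intervalIntegrable a b
  have h_reflect : ∫ θ in Real.pi..2 * Real.pi, f (Real.cos θ) =
      ∫ θ in 0..Real.pi, f (Real.cos θ) := by
    have h := intervalIntegral.integral_comp_sub_left (a := 0) (b := Real.pi)
      (fun θ => f (Real.cos θ)) (2 * Real.pi)
    simp only [Real.cos_two_pi_sub] at h
    rw [h, sub_zero, two_mul, add_sub_cancel_right]
  rw [Polynomial.Chebyshev.integral_measureT_eq_integral_cos, Real.circleAverage_def]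
  simp only [h_re]
  rw [← intervalIntegral.integral_add_adjacent_intervals (h_int 0 Real.pi) (h_int _ _), h_reflect,
    smul_eq_mul, ← two_mul, mul_inv]
  ring

theorem integral_half_one_add_rpow_measureT {p : ℝ} (hp : -1 / 2 < p) :
    ∫ x, ((1 + x) / 2) ^ p ∂Polynomial.Chebyshev.measureT =
      ProbabilityTheory.beta (p + 1 / 2) (1 / 2) := by
  have h_subst := intervalIntegral.mul_integral_comp_mul_sub (a := 0) (b := 1)
    (f := fun x : ℝ => ((1 + x) / 2) ^ p * √(1 - x ^ 2)⁻¹) 2 1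
  have h_integrand : ∀ u ∈ Set.Ioc (0 : ℝ) 1,
      2 * (((1 + (2 * u - 1)) / 2) ^ p * √(1 - (2 * u - 1) ^ 2)⁻¹) =
      u ^ (p + 1 / 2 - 1) * (1 - u) ^ ((1 / 2 : ℝ) - 1) := by
    rintro u ⟨hu, hu'⟩
    have h_sqrt : √(1 - (2 * u - 1) ^ 2)⁻¹ = (u ^ (-1 / 2 : ℝ) * (1 - u) ^ (-1 / 2 : ℝ)) / 2 := by
      rw [show 1 - (2 * u - 1) ^ 2 = 2 ^ 2 * (u * (1 - u)) by ring, Real.sqrt_inv,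
        Real.sqrt_mul (by positivity), Real.sqrt_sq zero_le_two, Real.sqrt_eq_rpow,
        ← Real.mul_rpow hu.le (sub_nonneg.mpr hu'), neg_div,
        Real.rpow_neg (mul_nonneg hu.le (sub_nonneg.mpr hu')), mul_inv]
      ring
    rw [h_sqrt, show p + 1 / 2 - 1 = p + -1 / 2 by ring, Real.rpow_add hu,
      show (1 : ℝ) / 2 - 1 = -1 / 2 by norm_num, add_sub_cancel, mul_div_cancel_left₀ u two_ne_zero]
    ring
  rw [Polynomial.Chebyshev.integral_measureT]
  calc _ = 2 * ∫ u in 0..1, ((1 + (2 * u - 1)) / 2) ^ p * √(1 - (2 * u - 1) ^ 2)⁻¹ := by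
        rw [h_subst]; norm_num
    _ = ∫ u in Set.Ioc (0 : ℝ) 1, u ^ (p + 1 / 2 - 1) * (1 - u) ^ ((1 / 2 : ℝ) - 1) := by
        rw [← intervalIntegral.integral_const_mul, intervalIntegral.integral_of_le zero_le_one,
          setIntegral_congr_fun measurableSet_Ioc h_integrand]
    _ = _ := integral_rpow_mul_one_sub_rpow (by linarith) one_half_pos

theorem mul_beta_one_half {p : ℝ} (hp : p ≠ 0) :
    p * ProbabilityTheory.beta p (1 / 2) =
      √Real.pi * Real.Gamma (p + 1) / Real.Gamma (p + 1 / 2) := by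
  rw [ProbabilityTheory.beta, Real.Gamma_one_half_eq, Real.Gamma_add_one hp]
  ring

theorem beta_add_one_half {p : ℝ} (hp : p ≠ 0) :
    ProbabilityTheory.beta (p + 1 / 2) (1 / 2) =
      Real.pi * (p * ProbabilityTheory.beta p (1 / 2))⁻¹ := by
  rw [mul_beta_one_half hp, ProbabilityTheory.beta, Real.Gamma_one_half_eq, add_assoc, add_halves]
  have h_sqrt : √Real.pi ≠ 0 := by positivity
  nth_rewrite 2 [← Real.mul_self_sqrt Real.pi_pos.le]
  field_simp

theorem circleAverage_half_one_add_re_rpow {p : ℝ} (hp : 0 < p) :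
    Real.circleAverage (fun z => ((1 + z.re) / 2) ^ p) 0 1 =
      (p * ProbabilityTheory.beta p (1 / 2))⁻¹ := by
  have h_cont : Continuous fun x : ℝ => ((1 + x) / 2) ^ p :=
    (by fun_prop : Continuous fun x : ℝ => (1 + x) / 2).rpow_const fun _ => .inr hp.le
  rw [circleAverage_comp_re h_cont, integral_half_one_add_rpow_measureT (by linarith),
    beta_add_one_half hp.ne', inv_mul_cancel_left₀ Real.pi_ne_zero]

theorem circleAverage_mul_scaled_re_rpow {p : ℝ} (hp : 0 < p) (c : ℝ) {A : ℝ} (hA : 0 ≤ A) :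
    Real.circleAverage (fun z => c * (A * ((1 + z.re) / 2)) ^ p) 0 1 =
      c * A ^ p * (p * ProbabilityTheory.beta p (1 / 2))⁻¹ := by
  have h_sphere : Set.EqOn (fun z : ℂ => c * (A * ((1 + z.re) / 2)) ^ p)
      (fun z => (c * A ^ p) • ((1 + z.re) / 2) ^ p) (Metric.sphere 0 |1|) := by
    intro z hz
    have h_norm : ‖z‖ = 1 := by simpa using hz
    have h_re : -1 ≤ z.re := (abs_le.mp (h_norm ▸ Complex.abs_re_le_norm z)).1
    simp only [smul_eq_mul]
    rw [Real.mul_rpow hA (by linarith), mul_assoc]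
  rw [Real.circleAverage_congr_sphere h_sphere, Real.circleAverage_fun_smul,
    circleAverage_half_one_add_re_rpow hp, smul_eq_mul]

theorem exists_le_sum_log_abs_sub_sub_rpow {p : ℝ} (hp : 0 < p) (s : Finset ℝ) :
    ∃ x, 0 ≤ x ∧ x ∉ s ∧ #s * (1 / p * Real.log #s - Real.log 4 - 1 / p) ≤
      ∑ t ∈ s, Real.log |x - t| - ProbabilityTheory.beta p (1 / 2) * x ^ p := by
  rcases s.eq_empty_or_nonempty with rfl | hs
  · exact ⟨0, by simp [Real.zero_rpow hp.ne']⟩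
  have h_card : (0 : ℝ) < #s := by exact_mod_cast hs.card_pos
  have h_beta := ProbabilityTheory.beta_pos hp one_half_pos
  have h_cont : Continuous fun x : ℝ => ProbabilityTheory.beta p (1 / 2) * x ^ p :=
    (Real.continuous_rpow_const hp.le).const_mul _
  -- This `A` maximizes the resulting bound `#s * log (A / 4) - A ^ p / p`.
  set A := (#s : ℝ) ^ (1 / p)
  have hA : 0 < A := by positivity
  have hA_rpow : A ^ p = #s := by
    rw [← Real.rpow_mul h_card.le, one_div_mul_cancel hp.ne', Real.rpow_one]
  obtain ⟨x, hx, hxs, h⟩ := exists_sum_log_abs_sub_ge s hA h_cont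
  refine ⟨x, hx, hxs, ?_⟩
  rw [circleAverage_mul_scaled_re_rpow hp _ hA.le, hA_rpow, Real.log_div hA.ne' four_ne_zero,
    Real.log_rpow h_card] at h
  have h_avg : ProbabilityTheory.beta p (1 / 2) * #s * (p * ProbabilityTheory.beta p (1 / 2))⁻¹ =
      #s * (1 / p) := by field_simp
  linarith

theorem sum_sum_insert_of_symm {α M : Type*} [DecidableEq α] [AddCommMonoid M] {s : Finset α}
    {x : α} (hx : x ∉ s) {f : α → α → M} (h_symm : ∀ a b, f a b = f b a) (h_diag : f x x = 0) :
    ∑ a ∈ insert x s, ∑ b ∈ insert x s, f a b = ∑ a ∈ s, ∑ b ∈ s, f a b + 2 • ∑ b ∈ s, f x b := by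
  simp only [sum_insert hx, h_diag, zero_add, sum_add_distrib, h_symm _ x]
  rw [two_nsmul]
  abel

theorem exists_finset_le_energy {p : ℝ} (hp : 0 < p) (n : ℕ) :
    ∃ s : Finset ℝ, #s = n ∧ (∀ x ∈ s, 0 ≤ x) ∧
      ∑ k ∈ range n, (k : ℝ) * (1 / p * Real.log k - Real.log 4 - 1 / p) ≤
        1 / 2 * ∑ x ∈ s, ∑ y ∈ s, Real.log |x - y| -
          ProbabilityTheory.beta p (1 / 2) * ∑ x ∈ s, x ^ p := by
  induction n with
  | zero => exact ⟨∅, by simp⟩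
  | succ n ih =>
    obtain ⟨s, rfl, hs, h_energy⟩ := ih
    obtain ⟨x, hx, hxs, h_le⟩ := exists_le_sum_log_abs_sub_sub_rpow hp s
    refine ⟨insert x s, card_insert_of_notMem hxs, (forall_mem_insert _ _ _).mpr ⟨hx, hs⟩, ?_⟩
    rw [sum_range_succ, sum_sum_insert_of_symm hxs (fun a b => by rw [abs_sub_comm]) (by simp),
      sum_insert hxs, nsmul_eq_mul]
    push_cast
    linarith

theorem exists_strictMono_le_weightedEnergy {p : ℝ} (hp : 0 < p) (n : ℕ) :
    ∃ t : Fin n → ℝ, (∀ i, 0 ≤ t i) ∧ StrictMono t ∧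
      ∑ k ∈ range n, (k : ℝ) * (1 / p * Real.log k - Real.log 4 - 1 / p) ≤
        weightedEnergy (ProbabilityTheory.beta p (1 / 2)) p t := by
  obtain ⟨s, hs, hs0, h_energy⟩ := exists_finset_le_energy hp n
  have h_mono := (s.orderEmbOfFin hs).strictMono
  have h_sum (f : ℝ → ℝ) : ∑ x ∈ s, f x = ∑ i, f (s.orderEmbOfFin hs i) := by
    rw [← sum_image (f := f) h_mono.injective.injOn, image_orderEmbOfFin_univ]
  refine ⟨s.orderEmbOfFin hs, fun i => hs0 _ (s.orderEmbOfFin_mem hs i), h_mono, ?_⟩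
  simp only [h_sum] at h_energy
  rw [← two_mul_logVandermonde] at h_energy
  rw [weightedEnergy]
  linarith

/-! ### Asymptotics -/

theorem sum_range_natCast (n : ℕ) : ∑ k ∈ range n, (k : ℝ) = n * (n - 1) / 2 := by
  rw [← Nat.cast_sum, sum_range_id, ← Nat.choose_two_right, Nat.cast_choose_two]

theorem inv_add_one_le_log_add_one_sub_log {x : ℝ} (hx : 0 < x) :
    (x + 1)⁻¹ ≤ Real.log (x + 1) - Real.log x := by
  have h := Real.one_sub_inv_le_log_of_pos (show 0 < (x + 1) / x by positivity)
  rw [Real.log_div (by positivity) hx.ne', inv_div] at h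
  refine le_of_eq_of_le ?_ h
  field_simp
  ring

theorem log_add_one_sub_log_le_inv {x : ℝ} (hx : 0 < x) :
    Real.log (x + 1) - Real.log x ≤ x⁻¹ := by
  have h := Real.log_le_sub_one_of_pos (show 0 < (x + 1) / x by positivity)
  rw [Real.log_div (by positivity) hx.ne'] at h
  refine h.trans_eq ?_
  field_simp
  ring

theorem sum_log_add_le {x : ℝ} (hx : 1 ≤ x) (n : ℕ) :
    ∑ i ∈ range n, Real.log (i + x) ≤ (n + x) * Real.log (n + x) - n := by
  induction n with
  | zero => simpa using mul_nonneg (zero_le_one.trans hx) (Real.log_nonneg hx)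
  | succ n ih =>
    have h_pos : 0 < n + x := by positivity
    have h := mul_le_mul_of_nonneg_left (inv_add_one_le_log_add_one_sub_log h_pos)
      (by positivity : 0 ≤ n + x + 1)
    rw [mul_inv_cancel₀ (by positivity)] at h
    rw [sum_range_succ, Nat.cast_succ, add_right_comm (n : ℝ) 1]
    linarith

/-- The primitive of `x ↦ x * log x` vanishing at `0`, used to compare sums of `k * log k` with
integrals. -/
noncomputable def mulLogPrimitive (x : ℝ) : ℝ := x ^ 2 / 2 * (Real.log x - 1 / 2)

theorem mul_log_le_mulLogPrimitive_sub {x : ℝ} (hx : 1 ≤ x) :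
    x * Real.log x ≤ mulLogPrimitive (x + 1) - mulLogPrimitive x := by
  have h_pos : 0 < x := by positivity
  have h := mul_le_mul_of_nonneg_left (inv_add_one_le_log_add_one_sub_log h_pos)
    (by positivity : 0 ≤ (x + 1) ^ 2 / 2)
  have h_cancel : (x + 1) ^ 2 / 2 * (x + 1)⁻¹ = (x + 1) / 2 := by field_simp
  have h_log := Real.log_nonneg hx
  rw [h_cancel] at h
  unfold mulLogPrimitive
  linarith

theorem mulLogPrimitive_sub_le {x : ℝ} (hx : 0 ≤ x) :
    mulLogPrimitive (x + 1) - mulLogPrimitive x ≤ (x + 1) * Real.log (x + 1) := by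
  have h_log : 0 ≤ Real.log (x + 1) := Real.log_nonneg (by linarith)
  have h : x ^ 2 / 2 * (Real.log (x + 1) - Real.log x) ≤ x / 2 := by
    rcases hx.eq_or_lt with rfl | h_pos
    · simp
    · calc x ^ 2 / 2 * (Real.log (x + 1) - Real.log x) ≤ x ^ 2 / 2 * x⁻¹ := by
            gcongr
            exact log_add_one_sub_log_le_inv h_pos
        _ = x / 2 := by field_simp
  unfold mulLogPrimitive
  linarith

theorem mulLogPrimitive_le_sum_mul_log (n : ℕ) :
    mulLogPrimitive n ≤ ∑ k ∈ range (n + 1), (k : ℝ) * Real.log k := by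
  induction n with
  | zero => simp [mulLogPrimitive]
  | succ n ih =>
    have h := mulLogPrimitive_sub_le (Nat.cast_nonneg (α := ℝ) n)
    rw [sum_range_succ, Nat.cast_succ]
    linarith

theorem sum_sum_log_add_le {x : ℝ} (hx : 1 ≤ x) (n : ℕ) :
    ∑ j ∈ range n, ∑ i ∈ range j, Real.log (i + x) ≤
      mulLogPrimitive (n + x) - mulLogPrimitive x - n * (n - 1) / 2 := by
  induction n with
  | zero => simp
  | succ n ih =>
    have h_inner := sum_log_add_le hx n
    have h_outer := mul_log_le_mulLogPrimitive_sub
      (show 1 ≤ n + x from hx.trans (le_add_of_nonneg_left n.cast_nonneg))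
    rw [sum_range_succ, Nat.cast_succ, add_right_comm (n : ℝ) 1]
    linarith

theorem tendsto_add_div_add_atTop (a b : ℝ) :
    Tendsto (fun x : ℝ => (x + a) / (x + b)) atTop (nhds 1) := by
  have h := ((tendsto_atTop_add_const_right _ b tendsto_id).const_div_atTop (a - b)).const_add 1
  rw [add_zero] at h
  refine h.congr' ?_
  filter_upwards [eventually_gt_atTop (-b)] with x hx
  have : x + b ≠ 0 := by linarith
  simp only [id]
  field_simp
  ring

theorem tendsto_log_div_sub_one_atTop :
    Tendsto (fun x : ℝ => Real.log x / (x - 1)) atTop (nhds 0) := by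
  have h := Real.isLittleO_log_id_atTop.tendsto_div_nhds_zero.mul (tendsto_add_div_add_atTop 0 (-1))
  rw [zero_mul] at h
  refine h.congr' ?_
  filter_upwards [eventually_gt_atTop 0] with x hx
  rw [id, add_zero, div_mul_div_cancel₀ hx.ne', sub_eq_add_neg]

theorem tendsto_mulLogPrimitive_sub_log (a : ℝ) :
    Tendsto (fun x => 2 / (x * (x - 1)) * mulLogPrimitive (x + a) - Real.log ((x - 1) / 2)) atTop
      (nhds (Real.log 2 - 1 / 2)) := by
  have h_shift := tendsto_add_div_add_atTop a (-1)
  have h_log_ratio := (Real.continuousAt_log one_ne_zero).tendsto.comp h_shift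
  have h_log_div := Real.isLittleO_log_id_atTop.tendsto_div_nhds_zero.comp
    (tendsto_atTop_add_const_right _ a tendsto_id)
  have h_coeff := (tendsto_id.const_div_atTop (a ^ 2)).const_add (2 * a + 1)
  have h := ((((h_coeff.mul h_shift).mul h_log_div).add h_log_ratio).sub
    ((h_shift.mul (tendsto_add_div_add_atTop a 0)).const_mul (1 / 2))).add_const (Real.log 2)
  simp only [Real.log_one, mul_zero, zero_add, mul_one] at h
  rw [sub_eq_neg_add, ← zero_sub]
  refine h.congr' ?_
  filter_upwards [eventually_gt_atTop (-a), eventually_gt_atTop 1] with x hxa hx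
  have hx0 : x ≠ 0 := by positivity
  have hx1 : x - 1 ≠ 0 := by linarith
  have hxa' : x + a ≠ 0 := by linarith
  simp only [Function.comp_apply, id, add_zero, ← sub_eq_add_neg]
  rw [Real.log_div hxa' hx1, Real.log_div hx1 two_ne_zero, mulLogPrimitive]
  field_simp
  ring

theorem sum_log_block_bound_le {p : ℝ} (hp : 0 < p) {m : ℕ} (hm : 0 < m) (n : ℕ) :
    ∑ j ∈ range n, ((j / m + 1 : ℕ) * Real.log 2 +
        ∑ i ∈ range j, (1 / p * Real.log (i + m) - Real.log 4)) ≤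
      (n * (n - 1) / 2 / m + n) * Real.log 2 +
        1 / p * (mulLogPrimitive (n + m) - mulLogPrimitive m - n * (n - 1) / 2) -
        n * (n - 1) / 2 * Real.log 4 := by
  have h_blocks : ∑ j ∈ range n, ((j / m + 1 : ℕ) : ℝ) ≤ n * (n - 1) / 2 / m + n :=
    calc ∑ j ∈ range n, ((j / m + 1 : ℕ) : ℝ) ≤ ∑ j ∈ range n, ((j : ℝ) / m + 1) :=
          sum_le_sum fun j _ => by push_cast; gcongr; exact Nat.cast_div_le
      _ = n * (n - 1) / 2 / m + n := by
          rw [sum_add_distrib, ← sum_div, sum_range_natCast]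
          simp
  calc _ = (∑ j ∈ range n, ((j / m + 1 : ℕ) : ℝ)) * Real.log 2 +
        1 / p * ∑ j ∈ range n, ∑ i ∈ range j, Real.log (i + m) -
        n * (n - 1) / 2 * Real.log 4 := by
        simp only [sum_add_distrib, sum_sub_distrib, ← mul_sum, ← sum_mul, sum_const, card_range,
          nsmul_eq_mul, sum_range_natCast]
        ring
    _ ≤ _ := by
        gcongr
        exact sum_sum_log_add_le (by exact_mod_cast hm) n

theorem log_factorial_le (n : ℕ) : Real.log n.factorial ≤ n * Real.log n := by
  rw [← Real.log_pow]
  exact Real.log_le_log (by positivity) (by exact_mod_cast n.factorial_le_pow)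

theorem weightedEnergy_le {p : ℝ} (hp : 0 < p) {m : ℕ} (hm : 0 < m) {n : ℕ} {t : Fin n → ℝ}
    (ht0 : ∀ i, 0 ≤ t i) (ht : Function.Injective t) :
    weightedEnergy (ProbabilityTheory.beta p (1 / 2)) p t ≤
      n * Real.log n + (n * (n - 1) / 2 / m + n) * Real.log 2 +
        1 / p * (mulLogPrimitive (n + m) - mulLogPrimitive m - n * (n - 1) / 2) -
        n * (n - 1) / 2 * Real.log 4 := by
  choose P h_monic h_deg hP using exists_monic_abs_eval_le_exp_rpow hp hm
  have h_energy := logVandermonde_le (s := Set.Ici 0) (P := fun j : Fin n => P j)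
    (fun j => h_monic j) (fun j => h_deg j) (fun j => hP j) ht0 ht
  rw [← mul_sum, Fin.sum_univ_eq_sum_range (fun j => (j / m + 1 : ℕ) * Real.log 2 +
    ∑ i ∈ range j, (1 / p * Real.log (i + m) - Real.log 4))] at h_energy
  have h_sum := sum_log_block_bound_le hp hm n
  have h_factorial := log_factorial_le n
  rw [weightedEnergy]
  linarith

theorem exists_strictMono_mulLogPrimitive_le_weightedEnergy {p : ℝ} (hp : 0 < p) {n : ℕ}
    (hn : 0 < n) :
    ∃ t : Fin n → ℝ, (∀ i, 0 ≤ t i) ∧ StrictMono t ∧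
      1 / p * (mulLogPrimitive (n - 1) - n * (n - 1) / 2) - n * (n - 1) / 2 * Real.log 4 ≤
        weightedEnergy (ProbabilityTheory.beta p (1 / 2)) p t := by
  obtain ⟨t, ht0, ht, h_le⟩ := exists_strictMono_le_weightedEnergy hp n
  refine ⟨t, ht0, ht, le_trans ?_ h_le⟩
  have h_sum : ∑ k ∈ range n, (k : ℝ) * (1 / p * Real.log k - Real.log 4 - 1 / p) =
      1 / p * (∑ k ∈ range n, (k : ℝ) * Real.log k - n * (n - 1) / 2) -
        n * (n - 1) / 2 * Real.log 4 := by
    rw [← sum_range_natCast, mul_sub, mul_sum, mul_sum, sum_mul, ← sum_sub_distrib,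
      ← sum_sub_distrib]
    exact sum_congr rfl fun k _ => by ring
  have h_primitive := mulLogPrimitive_le_sum_mul_log (n - 1)
  rw [Nat.sub_add_cancel hn, Nat.cast_pred hn] at h_primitive
  rw [h_sum]
  gcongr

/-- The main term, at `x = n`, of both the lower bound for `logDeltaN p n` (with `a = -1`) and the
upper bound for it by Chebyshev polynomials in blocks of length `m` (with `a = m`). -/
noncomputable def logRatioMainTerm (p a x : ℝ) : ℝ :=
  1 / p * (2 / (x * (x - 1)) * mulLogPrimitive (x + a) - Real.log ((x - 1) / 2) +
    Real.log (p * ProbabilityTheory.beta p (1 / 2))) - Real.log 4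

/-- The limit of `log Δ_n(p)`. -/
noncomputable def logDeltaLimit (p : ℝ) : ℝ :=
  1 / p * (Real.log 2 - 1 / 2 + Real.log (p * ProbabilityTheory.beta p (1 / 2))) - Real.log 4

theorem tendsto_logRatioMainTerm (p a : ℝ) :
    Tendsto (logRatioMainTerm p a) atTop (nhds (logDeltaLimit p)) :=
  (((tendsto_mulLogPrimitive_sub_log a).add_const _).const_mul _).sub_const _

theorem logRatio_le {p : ℝ} (hp : 0 < p) {m : ℕ} (hm : 0 < m) {n : ℕ} (hn : 2 ≤ n)
    {t : Fin n → ℝ} (ht0 : ∀ i, 0 ≤ t i) (ht : Function.Injective t) :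
    logRatio p t ≤ logRatioMainTerm p m n + Real.log 2 / m +
      (2 * (Real.log n / (n - 1)) + 2 * Real.log 2 / (n - 1) -
        2 * mulLogPrimitive m / p / (n * (n - 1))) := by
  have hn1 : (0 : ℝ) < n - 1 := sub_pos.mpr (by exact_mod_cast hn)
  obtain ⟨a, ha, h_eq⟩ := exists_smul_weightedEnergy_eq_logRatio
    (ProbabilityTheory.beta_pos hp one_half_pos) hp hn ht0 ht
  have h_le := weightedEnergy_le hp hm (t := a • t) (fun i => mul_nonneg ha.le (ht0 i))
    ((smul_right_injective ℝ ha.ne').comp ht)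
  grw [← h_eq, h_le]
  apply le_of_eq
  rw [logRatioMainTerm]
  field_simp
  ring

theorem exists_strictMono_le_logRatio {p : ℝ} (hp : 0 < p) {n : ℕ} (hn : 2 ≤ n) :
    ∃ t : Fin n → ℝ, (∀ i, 0 ≤ t i) ∧ StrictMono t ∧
      logRatioMainTerm p (-1) n ≤ logRatio p t := by
  have hn1 : (0 : ℝ) < n - 1 := sub_pos.mpr (by exact_mod_cast hn)
  obtain ⟨t, ht0, ht, h_le⟩ :=
    exists_strictMono_mulLogPrimitive_le_weightedEnergy hp (zero_lt_two.trans_le hn)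
  refine ⟨t, ht0, ht, le_trans ?_ (weightedEnergy_le_logRatio
    (ProbabilityTheory.beta_pos hp one_half_pos) hp hn ht0 ht.injective)⟩
  grw [← h_le]
  apply le_of_eq
  rw [logRatioMainTerm, ← sub_eq_add_neg]
  field_simp
  ring

theorem isLUB_logDeltaN {p : ℝ} (hp : 0 < p) {n : ℕ} (hn : 2 ≤ n) :
    IsLUB {r | ∃ t : Fin n → ℝ, (∀ i, 0 ≤ t i) ∧ StrictMono t ∧ r = logRatio p t}
      (logDeltaN p n) := by
  obtain ⟨t, ht0, ht, -⟩ := exists_strictMono_le_logRatio hp hn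
  exact isLUB_csSup ⟨_, t, ht0, ht, rfl⟩ ⟨_, fun _ ⟨_, ht0, ht, h_eq⟩ =>
    h_eq.le.trans (logRatio_le hp one_pos hn ht0 ht.injective)⟩

theorem logRatioMainTerm_le_logDeltaN {p : ℝ} (hp : 0 < p) {n : ℕ} (hn : 2 ≤ n) :
    logRatioMainTerm p (-1) n ≤ logDeltaN p n := by
  obtain ⟨t, ht0, ht, h_le⟩ := exists_strictMono_le_logRatio hp hn
  exact h_le.trans ((isLUB_logDeltaN hp hn).1 ⟨t, ht0, ht, rfl⟩)

theorem logDeltaN_le {p : ℝ} (hp : 0 < p) {m : ℕ} (hm : 0 < m) {n : ℕ} (hn : 2 ≤ n) :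
    logDeltaN p n ≤ logRatioMainTerm p m n + Real.log 2 / m +
      (2 * (Real.log n / (n - 1)) + 2 * Real.log 2 / (n - 1) -
        2 * mulLogPrimitive m / p / (n * (n - 1))) := by
  refine (isLUB_logDeltaN hp hn).2 ?_
  rintro _ ⟨t, ht0, ht, rfl⟩
  exact logRatio_le hp hm hn ht0 ht.injective

theorem eventually_logDeltaN_lt {p : ℝ} (hp : 0 < p) {b : ℝ} (hb : logDeltaLimit p < b) :
    ∀ᶠ n in atTop, logDeltaN p n < b := by
  have h_sub_one : Tendsto (fun x : ℝ => x - 1) atTop atTop :=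
    tendsto_atTop_add_const_right _ _ tendsto_id
  have h_shift : Tendsto (fun m : ℕ => logDeltaLimit p + Real.log 2 / m) atTop
      (nhds (logDeltaLimit p)) := by
    simpa using (tendsto_const_div_atTop_nhds_zero_nat (Real.log 2)).const_add (logDeltaLimit p)
  obtain ⟨m, hm_lt, hm⟩ := ((h_shift.eventually_lt_const hb).and (eventually_gt_atTop 0)).exists
  have h_bound := ((tendsto_logRatioMainTerm p m).add_const (Real.log 2 / m)).add
    (((tendsto_log_div_sub_one_atTop.const_mul 2).add
      (h_sub_one.const_div_atTop (2 * Real.log 2))).sub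
      ((tendsto_id.atTop_mul_atTop₀ h_sub_one).const_div_atTop (2 * mulLogPrimitive m / p)))
  simp only [mul_zero, add_zero, sub_zero] at h_bound
  filter_upwards [(h_bound.comp tendsto_natCast_atTop_atTop).eventually_lt_const hm_lt,
    eventually_ge_atTop 2] with n h_lt hn
  exact (logDeltaN_le hp hm hn).trans_lt h_lt

theorem tendsto_logDeltaN {p : ℝ} (hp : 0 < p) :
    Tendsto (logDeltaN p) atTop (nhds (logDeltaLimit p)) := by
  refine tendsto_order.mpr ⟨fun a ha => ?_, fun b hb => eventually_logDeltaN_lt hp hb⟩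
  have h_lower := (tendsto_logRatioMainTerm p (-1)).comp tendsto_natCast_atTop_atTop
  filter_upwards [h_lower.eventually_const_lt ha, eventually_ge_atTop 2] with n h_lt hn
  exact h_lt.trans_le (logRatioMainTerm_le_logDeltaN hp hn)

theorem exp_logDeltaLimit {p : ℝ} (hp : 0 < p) :
    Real.exp (logDeltaLimit p) = 1 / 4 * ((2 * √Real.pi * Real.Gamma (p + 1)) /
      (√(Real.exp 1) * Real.Gamma (p + 1 / 2))) ^ (1 / p) := by
  have h_base : (2 * √Real.pi * Real.Gamma (p + 1)) / (√(Real.exp 1) * Real.Gamma (p + 1 / 2)) =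
      2 * (p * ProbabilityTheory.beta p (1 / 2)) / √(Real.exp 1) := by
    rw [mul_beta_one_half hp.ne']
    field_simp
  have h_beta := ProbabilityTheory.beta_pos hp one_half_pos
  rw [h_base, Real.rpow_def_of_pos (by positivity), Real.log_div (by positivity) (by positivity),
    Real.log_mul two_ne_zero (by positivity), Real.log_sqrt (Real.exp_pos 1).le, Real.log_exp,
    logDeltaLimit, Real.exp_sub, Real.exp_log four_pos, div_eq_mul_one_div, mul_comm]
  congr 2
  ring

/-- For every `0 < p < ∞`, the sequence `Δ_n(p)` converges as `n → ∞` and its limit equals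
`(1/4) · (2√π Γ(p+1) / (√e Γ(p+1/2)))^{1/p}`. -/
theorem deltaN_tendsto (p : ℝ) (hp : 0 < p) :
    Tendsto (fun n => DeltaN p n) atTop (nhds
      ((1 / 4) * ((2 * Real.sqrt Real.pi * Real.Gamma (p + 1)) /
        (Real.sqrt (Real.exp 1) * Real.Gamma (p + 1 / 2))) ^ (1 / p))) := by
  rw [← exp_logDeltaLimit hp]
  exact (Real.continuous_exp.tendsto _).comp (tendsto_logDeltaN hp)
end

section
/- For every 0 < p < ∞, there exists a sequence ν_1, ν_2, … of absolutely continuous probability measures in M_1^p(ℝ_+) \ {δ_0} such that liminf_{n→∞} 𝒥_p(ν_n) ≥ lim_{n→∞} log Δ_n(p). -/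
open MeasureTheory Filter Finset
open scoped ENNReal

/-- The logarithmic energy `∫∫ log|x-y| μ(dx) μ(dy)`, with values in `ℝ ∪ {-∞}` (for the
measures considered here the positive part of the integral is always finite). -/
noncomputable def logEnergy (μ : Measure ℝ) : EReal :=
  ((∫⁻ z : ℝ × ℝ, ENNReal.ofReal (Real.log |z.1 - z.2|) ∂(μ.prod μ)).toReal : EReal)
    - ((∫⁻ z : ℝ × ℝ, ENNReal.ofReal (-Real.log |z.1 - z.2|) ∂(μ.prod μ)) : EReal)

/-- The functional `𝒥_p(μ) = ∫∫ log|x-y| μ(dx) μ(dy) - (1/p) log ∫ |x|^p μ(dx)`, with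
values in `ℝ ∪ {-∞}`. -/
noncomputable def Jfun (p : ℝ) (μ : Measure ℝ) : EReal :=
  logEnergy μ - (((1 / p) * Real.log (∫ x, |x| ^ p ∂μ) : ℝ) : EReal)

/-- `μ ∈ M_1^p(ℝ_+) \ {δ_0}`: a Borel probability measure on `ℝ_+ = [0,∞)` (i.e. giving no
mass to `(-∞,0)`) with finite `p`-th moment, different from the Dirac measure at `0`. -/
def MemM1pPos (p : ℝ) (μ : Measure ℝ) : Prop :=
  IsProbabilityMeasure μ ∧ μ (Set.Iio 0) = 0 ∧
    (∫⁻ x, ENNReal.ofReal (|x| ^ p) ∂μ) < ∞ ∧ μ ≠ Measure.dirac 0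

/-!
Deleting one entry of a tuple at random reproduces its energy on average, and by Jensen's
inequality the logarithm of the moment can only drop; so `log Δ_n(p)` decreases in `n`. It is
bounded below because of the tuples `0, 1, …, n - 1`, for which `∑ log j!` is estimated by
`n ^ j / j! ≤ e ^ n`.

To realise the limit by absolutely continuous measures, take a nearly optimal `n`-tuple `t`, let
`M` be the `L^p` norm of its empirical measure, and replace the `i`-th atom by the uniform
distribution on an interval of length `M n⁻³`. Shifting that interval by `i M n⁻³` keeps points of
different intervals at least as far apart as the atoms, so only the `n` diagonal terms of the
energy cost anything, namely `O(log n / n)` after normalization. The total displacement is at most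
`M n⁻²`, which multiplies the moment by `1 + o(1)`.
-/

/-- The set of strictly increasing tuples `0 ≤ t_1 < … < t_n`, over which the supremum defining
`log Δ_n(p)` is taken. -/
def orderedTuples (n : ℕ) : Set (Fin n → ℝ) :=
  {t | (∀ i, 0 ≤ t i) ∧ StrictMono t}

/-- The discrete logarithmic energy `Σ_{i≠j} log|t_i - t_j|` over ordered pairs. The diagonal terms
may be included because `Real.log 0 = 0`. -/
noncomputable def tupleEnergy {n : ℕ} (t : Fin n → ℝ) : ℝ :=
  ∑ i, ∑ j, Real.log |t i - t j|

/-- The `p`-th moment of the empirical measure of a tuple. -/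
noncomputable def tupleMoment (p : ℝ) {n : ℕ} (t : Fin n → ℝ) : ℝ :=
  (1 / n) * ∑ i, t i ^ p

/-- The discrete analogue of `𝒥_p`, whose supremum over ordered tuples is `log Δ_n(p)`. The energy
counts every pair twice, hence the normalization `1/(n(n-1))`. -/
noncomputable def tupleJ (p : ℝ) {n : ℕ} (t : Fin n → ℝ) : ℝ :=
  1 / (n * (n - 1)) * tupleEnergy t - (1 / p) * Real.log (tupleMoment p t)

section Sums

lemma sum_sum_eq_two_mul_sum_sum_lt {ι R : Type*} [Fintype ι] [LinearOrder ι] [CommSemiring R]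
    (G : ι → ι → R) (hsymm : ∀ i j, G i j = G j i) (hdiag : ∀ i, G i i = 0) :
    ∑ i, ∑ j, G i j = 2 * ∑ i, ∑ j, if i < j then G i j else 0 := by
  have hsplit (i j : ι) :
      G i j = (if i < j then G i j else 0) + if j < i then G j i else 0 := by
    rcases lt_trichotomy i j with h | rfl | h
    · simp [h, h.not_gt]
    · simp [hdiag]
    · simp [h, h.not_gt, hsymm i j]
  calc ∑ i, ∑ j, G i j
      = (∑ i, ∑ j, if i < j then G i j else 0) + ∑ i, ∑ j, if j < i then G j i else 0 := by
        simp_rw [← Finset.sum_add_distrib, ← hsplit]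
    _ = 2 * ∑ i, ∑ j, if i < j then G i j else 0 := by rw [Finset.sum_comm (s := univ), two_mul]

lemma sum_sum_succAbove {R : Type*} [CommRing R] {n : ℕ} (f : Fin (n + 1) → R) :
    ∑ k : Fin (n + 1), ∑ i, f (k.succAbove i) = n * ∑ i, f i := by
  have hrow (k : Fin (n + 1)) : ∑ i, f (k.succAbove i) = ∑ i, f i - f k :=
    eq_sub_of_add_eq' (Fin.sum_univ_succAbove f k).symm
  simp [hrow]
  ring

lemma sum_sum_sum_succAbove {R : Type*} [CommRing R] {n : ℕ} (G : Fin (n + 1) → Fin (n + 1) → R)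
    (hdiag : ∀ i, G i i = 0) :
    ∑ k : Fin (n + 1), ∑ i, ∑ j, G (k.succAbove i) (k.succAbove j)
      = (n - 1) * ∑ i, ∑ j, G i j := by
  have hminor (k : Fin (n + 1)) : ∑ i, ∑ j, G (k.succAbove i) (k.succAbove j)
      = ∑ i, ∑ j, G (k.succAbove i) j - ∑ i, G i k := by
    rw [Fin.sum_univ_succAbove (fun i => G i k) k, hdiag, zero_add, ← Finset.sum_sub_distrib]
    exact Finset.sum_congr rfl fun i _ =>
      eq_sub_of_add_eq' (Fin.sum_univ_succAbove (G (k.succAbove i)) k).symm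
  simp_rw [hminor]
  rw [Finset.sum_sub_distrib, sum_sum_succAbove (fun i => ∑ j, G i j),
    Finset.sum_comm (f := fun k i => G i k), sub_one_mul]

lemma sum_log_le_card_mul_log {ι : Type*} [Fintype ι] [Nonempty ι] {x : ι → ℝ}
    (hx : ∀ i, 0 < x i) :
    ∑ i, Real.log (x i) ≤
      Fintype.card ι * Real.log ((Fintype.card ι : ℝ)⁻¹ * ∑ i, x i) := by
  have hcard : (0 : ℝ) < Fintype.card ι := by exact_mod_cast Fintype.card_pos
  have hjensen := strictConcaveOn_log_Ioi.concaveOn.le_map_sum (t := univ)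
    (w := fun _ : ι => (Fintype.card ι : ℝ)⁻¹) (p := x) (fun _ _ => by positivity)
    (by simp) (fun i _ => hx i)
  simp only [smul_eq_mul, ← Finset.mul_sum] at hjensen
  rwa [inv_mul_le_iff₀ hcard] at hjensen

end Sums

section Tuples

variable {n : ℕ} {t : Fin n → ℝ} {p : ℝ}

lemma comp_succAbove_mem_orderedTuples {t : Fin (n + 1) → ℝ} (ht : t ∈ orderedTuples (n + 1))
    (k : Fin (n + 1)) : t ∘ k.succAbove ∈ orderedTuples n :=
  ⟨fun _ => ht.1 _, ht.2.comp (Fin.strictMono_succAbove k)⟩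

lemma natCast_mem_orderedTuples (n : ℕ) : (fun i : Fin n => (i : ℝ)) ∈ orderedTuples n :=
  ⟨fun i => Nat.cast_nonneg i, fun _ _ h => Nat.cast_lt.2 h⟩

lemma tupleMoment_pos (hn : 2 ≤ n) (ht : t ∈ orderedTuples n) : 0 < tupleMoment p t := by
  have hlt : t ⟨0, by lia⟩ < t ⟨1, by lia⟩ := ht.2 (by simp [Fin.lt_def])
  have hsum : 0 < ∑ i, t i ^ p := Finset.sum_pos' (fun i _ => Real.rpow_nonneg (ht.1 i) p)
    ⟨⟨1, by lia⟩, Finset.mem_univ _, Real.rpow_pos_of_pos ((ht.1 _).trans_lt hlt) p⟩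
  unfold tupleMoment
  positivity

lemma tupleEnergy_eq_two_mul_sum_lt (t : Fin n → ℝ) :
    tupleEnergy t = 2 * ∑ i, ∑ j, if i < j then Real.log |t i - t j| else 0 :=
  sum_sum_eq_two_mul_sum_sum_lt (fun i j => Real.log |t i - t j|)
    (fun i j => by rw [abs_sub_comm]) (by simp)

lemma logDeltaN_eq_sSup_image (p : ℝ) (n : ℕ) :
    logDeltaN p n = sSup (tupleJ p '' orderedTuples n) := by
  have hJ (t : Fin n → ℝ) : tupleJ p t =
      (2 / (n * (n - 1) : ℝ)) * (∑ i, ∑ j, if i < j then Real.log |t i - t j| else 0)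
        - (1 / p) * Real.log ((1 / n : ℝ) * ∑ i, t i ^ p) := by
    rw [tupleJ, tupleMoment, tupleEnergy_eq_two_mul_sum_lt]
    ring
  rw [logDeltaN]
  congr 1
  ext r
  simp only [orderedTuples, Set.mem_image, Set.mem_ofPred_eq, hJ, and_assoc, eq_comm]

end Tuples

section Monotonicity

variable {p : ℝ} {n : ℕ}

lemma sum_tupleEnergy_comp_succAbove (t : Fin (n + 1) → ℝ) :
    ∑ k : Fin (n + 1), tupleEnergy (t ∘ k.succAbove) = (n - 1) * tupleEnergy t :=
  sum_sum_sum_succAbove (fun i j => Real.log |t i - t j|) (by simp)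

lemma sum_tupleMoment_comp_succAbove (hn : n ≠ 0) (p : ℝ) (t : Fin (n + 1) → ℝ) :
    ∑ k : Fin (n + 1), tupleMoment p (t ∘ k.succAbove) = (n + 1) * tupleMoment p t := by
  have hdel := sum_sum_succAbove fun i => t i ^ p
  simp only [tupleMoment, Function.comp_apply, ← Finset.mul_sum, hdel]
  push_cast
  field_simp

lemma mul_tupleJ_le_sum_comp_succAbove (hp : 0 < p) (hn : 2 ≤ n) {t : Fin (n + 1) → ℝ}
    (ht : t ∈ orderedTuples (n + 1)) :
    (n + 1) * tupleJ p t ≤ ∑ k : Fin (n + 1), tupleJ p (t ∘ k.succAbove) := by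
  have hlog : ∑ k : Fin (n + 1), Real.log (tupleMoment p (t ∘ k.succAbove)) ≤
      (n + 1) * Real.log (tupleMoment p t) := by
    have h := sum_log_le_card_mul_log fun k : Fin (n + 1) =>
      tupleMoment_pos (p := p) hn (comp_succAbove_mem_orderedTuples ht k)
    rw [sum_tupleMoment_comp_succAbove (by lia), Fintype.card_fin, Nat.cast_succ,
      inv_mul_cancel_left₀ (by positivity)] at h
    exact h
  have hn' : (2 : ℝ) ≤ n := by exact_mod_cast hn
  have hn1 : (n : ℝ) - 1 ≠ 0 := by linarith
  calc (n + 1) * tupleJ p t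
      = 1 / (n * (n - 1)) * ((n - 1) * tupleEnergy t)
          - 1 / p * ((n + 1) * Real.log (tupleMoment p t)) := by
        rw [tupleJ, Nat.cast_succ, add_sub_cancel_right]
        field_simp
    _ ≤ 1 / (n * (n - 1)) * ((n - 1) * tupleEnergy t)
          - 1 / p * ∑ k : Fin (n + 1), Real.log (tupleMoment p (t ∘ k.succAbove)) := by gcongr
    _ = ∑ k : Fin (n + 1), tupleJ p (t ∘ k.succAbove) := by
        simp only [tupleJ, Finset.sum_sub_distrib, ← Finset.mul_sum,
          sum_tupleEnergy_comp_succAbove]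

lemma tupleJ_le_of_forall_comp_succAbove (hp : 0 < p) (hn : 2 ≤ n) {B : ℝ}
    (hB : ∀ s ∈ orderedTuples n, tupleJ p s ≤ B) {t : Fin (n + 1) → ℝ}
    (ht : t ∈ orderedTuples (n + 1)) : tupleJ p t ≤ B := by
  have havg : (n + 1) * tupleJ p t ≤ (n + 1) * B :=
    calc (n + 1) * tupleJ p t
        ≤ ∑ k : Fin (n + 1), tupleJ p (t ∘ k.succAbove) := mul_tupleJ_le_sum_comp_succAbove hp hn ht
      _ ≤ ∑ _k : Fin (n + 1), B :=
          Finset.sum_le_sum fun k _ => hB _ (comp_succAbove_mem_orderedTuples ht k)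
      _ = (n + 1) * B := by simp
  exact le_of_mul_le_mul_left havg (by positivity)

lemma tupleJ_two_le (hp : 0 < p) {t : Fin 2 → ℝ} (ht : t ∈ orderedTuples 2) :
    tupleJ p t ≤ (1 / p) * Real.log 2 := by
  have h0 : 0 ≤ t 0 := ht.1 0
  have h01 : t 0 < t 1 := ht.2 (by simp)
  have h1 : 0 < t 1 := h0.trans_lt h01
  have henergy : 1 / ((2 : ℕ) * ((2 : ℕ) - 1) : ℝ) * tupleEnergy t ≤ Real.log (t 1) := by
    have hdist : tupleEnergy t = 2 * Real.log (t 1 - t 0) := by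
      rw [← Real.log_abs, abs_sub_comm]
      simp [tupleEnergy_eq_two_mul_sum_lt, Fin.sum_univ_two]
    have hle : Real.log (t 1 - t 0) ≤ Real.log (t 1) :=
      Real.log_le_log (sub_pos.2 h01) (sub_le_self (t 1) h0)
    rw [hdist]
    push_cast
    linarith
  have hmoment : t 1 ^ p / 2 ≤ tupleMoment p t := by
    simp only [tupleMoment, Fin.sum_univ_two]
    push_cast
    linarith [Real.rpow_nonneg h0 p]
  have hlog : Real.log (t 1) - (1 / p) * Real.log 2 ≤ (1 / p) * Real.log (tupleMoment p t) :=
    calc Real.log (t 1) - (1 / p) * Real.log 2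
        = (1 / p) * Real.log (t 1 ^ p / 2) := by
          rw [Real.log_div (by positivity) two_ne_zero, Real.log_rpow h1]
          field_simp
      _ ≤ (1 / p) * Real.log (tupleMoment p t) := by gcongr
  unfold tupleJ
  linarith

lemma tupleJ_le (hp : 0 < p) (hn : 2 ≤ n) :
    ∀ t ∈ orderedTuples n, tupleJ p t ≤ (1 / p) * Real.log 2 := by
  induction n, hn using Nat.le_induction with
  | base => exact fun _ => tupleJ_two_le hp
  | succ n hn ih => exact fun _ => tupleJ_le_of_forall_comp_succAbove hp hn ih

lemma tupleJ_le_logDeltaN (hp : 0 < p) (hn : 2 ≤ n) {t : Fin n → ℝ} (ht : t ∈ orderedTuples n) :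
    tupleJ p t ≤ logDeltaN p n := by
  rw [logDeltaN_eq_sSup_image]
  exact le_csSup ⟨_, Set.forall_mem_image.2 (tupleJ_le hp hn)⟩ (Set.mem_image_of_mem _ ht)

lemma nonempty_image_orderedTuples (p : ℝ) (n : ℕ) : (tupleJ p '' orderedTuples n).Nonempty :=
  (Set.nonempty_of_mem (natCast_mem_orderedTuples n)).image _

lemma logDeltaN_succ_le (hp : 0 < p) (hn : 2 ≤ n) : logDeltaN p (n + 1) ≤ logDeltaN p n := by
  rw [logDeltaN_eq_sSup_image p (n + 1)]
  exact csSup_le (nonempty_image_orderedTuples p _) <| Set.forall_mem_image.2 fun _ =>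
    tupleJ_le_of_forall_comp_succAbove hp hn fun _ => tupleJ_le_logDeltaN hp hn

end Monotonicity

section LowerBound

variable {p : ℝ} {n : ℕ}

lemma mul_log_sub_le_log_factorial (hn : n ≠ 0) (j : ℕ) :
    j * Real.log n - n ≤ Real.log j.factorial := by
  have h := Real.log_le_log (by positivity) (Real.pow_div_factorial_le_exp n n.cast_nonneg j)
  rw [Real.log_exp, Real.log_div (by positivity) (by positivity), Real.log_pow] at h
  linarith

lemma sum_log_sub_eq_log_factorial (j : Fin n) :
    ∑ i : Fin n, (if i < j then Real.log |(i : ℝ) - j| else 0) = Real.log (j : ℕ).factorial := by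
  have hfilter : (range n).filter (· < (j : ℕ)) = range j := by
    ext i
    simp only [Finset.mem_filter, Finset.mem_range]
    lia
  simp only [Fin.lt_def]
  rw [Fin.sum_univ_eq_sum_range (fun i : ℕ => if i < (j : ℕ) then Real.log |(i : ℝ) - j| else 0),
    ← Finset.sum_filter, hfilter, ← Nat.descFactorial_self, Nat.descFactorial_eq_prod_range,
    Nat.cast_prod, Real.log_prod fun i hi => by
      have := Finset.mem_range.1 hi
      exact_mod_cast (by lia : (j : ℕ) - i ≠ 0)]
  refine Finset.sum_congr rfl fun i hi => ?_
  rw [abs_sub_comm, Nat.cast_sub (Finset.mem_range.1 hi).le, Real.log_abs]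

lemma le_tupleEnergy_natCast (hn : n ≠ 0) :
    n * (n - 1) * Real.log n - 2 * n ^ 2 ≤ tupleEnergy fun i : Fin n => (i : ℝ) := by
  have hgauss : ∑ j : Fin n, (j : ℝ) = n * (n - 1) / 2 := by
    rw [Fin.sum_univ_eq_sum_range (fun j : ℕ => (j : ℝ)), ← Nat.cast_sum,
      Finset.sum_range_id, ← Nat.choose_two_right, Nat.cast_choose_two]
  calc n * (n - 1) * Real.log n - 2 * (n : ℝ) ^ 2
      = 2 * ∑ j : Fin n, ((j : ℝ) * Real.log n - n) := by
        rw [Finset.sum_sub_distrib, ← Finset.sum_mul, hgauss]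
        simp
        ring
    _ ≤ 2 * ∑ j : Fin n, Real.log (j : ℕ).factorial := by
        gcongr with j
        exact mul_log_sub_le_log_factorial hn j
    _ = tupleEnergy fun i : Fin n => (i : ℝ) := by
        rw [tupleEnergy_eq_two_mul_sum_lt, Finset.sum_comm]
        simp only [sum_log_sub_eq_log_factorial]

lemma tupleMoment_natCast_le (hp : 0 ≤ p) (hn : n ≠ 0) :
    tupleMoment p (fun i : Fin n => (i : ℝ)) ≤ (n : ℝ) ^ p :=
  calc tupleMoment p (fun i : Fin n => (i : ℝ))
      ≤ (1 / n) * ∑ _i : Fin n, (n : ℝ) ^ p := by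
        unfold tupleMoment
        gcongr with i
        exact Nat.cast_le.2 i.2.le
    _ = (n : ℝ) ^ p := by simp [hn]

lemma neg_four_le_logDeltaN (hp : 0 < p) (hn : 2 ≤ n) : -4 ≤ logDeltaN p n := by
  have hn' : (2 : ℝ) ≤ n := by exact_mod_cast hn
  have hn1 : (0 : ℝ) < n - 1 := by linarith
  refine le_trans ?_ (tupleJ_le_logDeltaN hp hn (natCast_mem_orderedTuples n))
  have hpos := tupleMoment_pos (p := p) hn (natCast_mem_orderedTuples n)
  calc (-4 : ℝ)
      ≤ 1 / (n * (n - 1)) * (n * (n - 1) * Real.log n - 2 * n ^ 2)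
          - (1 / p) * Real.log ((n : ℝ) ^ p) := by
        have hratio : 2 * (n : ℝ) / (n - 1) ≤ 4 := by
          rw [div_le_iff₀ hn1]
          linarith
        rw [Real.log_rpow (by positivity)]
        refine (neg_le_neg hratio).trans_eq ?_
        field_simp
        ring
    _ ≤ tupleJ p fun i : Fin n => (i : ℝ) := by
        unfold tupleJ
        gcongr
        · exact le_tupleEnergy_natCast (by lia)
        · exact tupleMoment_natCast_le hp.le (by lia)

lemma exists_tendsto_logDeltaN (hp : 0 < p) :
    ∃ L : ℝ, Tendsto (fun n => logDeltaN p n) atTop (nhds L) ∧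
      ∀ n, 2 ≤ n → L ≤ logDeltaN p n := by
  have hanti : Antitone fun k => logDeltaN p (k + 2) :=
    antitone_nat_of_succ_le fun k => logDeltaN_succ_le hp (by lia)
  have hbdd : BddBelow (Set.range fun k => logDeltaN p (k + 2)) :=
    ⟨-4, Set.forall_mem_range.2 fun k => neg_four_le_logDeltaN hp (by lia)⟩
  refine ⟨_, (tendsto_add_atTop_iff_nat 2).1 (tendsto_atTop_ciInf hanti hbdd), fun n hn => ?_⟩
  obtain ⟨k, rfl⟩ := Nat.exists_eq_add_of_le' hn
  exact ciInf_le hbdd k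

end LowerBound

section Conditioning

open ProbabilityTheory

variable {α β : Type*} [MeasurableSpace α] [MeasurableSpace β] {μ : Measure α} {ν : Measure β}
  {s : Set α} {t : Set β}

lemma cond_prod_cond [SFinite μ] [SFinite ν] (hs : μ s ≠ 0) (ht : ν t ≠ 0) :
    μ[|s].prod ν[|t] = (μ.prod ν)[|s ×ˢ t] := by
  simp only [ProbabilityTheory.cond]
  rw [Measure.prod_smul_left, Measure.prod_smul_right, smul_smul, Measure.prod_restrict,
    Measure.prod_prod, ENNReal.mul_inv (.inl hs) (.inr ht)]

lemma integrable_cond {E : Type*} [NormedAddCommGroup E] {f : α → E} (hs : μ s ≠ 0)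
    (hf : IntegrableOn f s μ) : Integrable f μ[|s] :=
  Integrable.smul_measure hf (ENNReal.inv_ne_top.2 hs)

end Conditioning

section Mixtures

variable {ι α : Type*} [Fintype ι] [MeasurableSpace α] {μ : ι → Measure α}

/-- The equal-weight mixture of a finite family of measures: the law of a sample from `μ i` with
`i` uniform on `ι`. -/
noncomputable def equalMixture (μ : ι → Measure α) : Measure α :=
  (Fintype.card ι : ℝ≥0∞)⁻¹ • Measure.sum μ

instance isProbabilityMeasure_equalMixture [Nonempty ι] [∀ i, IsProbabilityMeasure (μ i)] :
    IsProbabilityMeasure (equalMixture μ) where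
  measure_univ := by
    simp [equalMixture, ENNReal.inv_mul_cancel]

lemma equalMixture_apply_eq_zero {s : Set α} (h : ∀ i, μ i s = 0) : equalMixture μ s = 0 := by
  simp [equalMixture, h]

lemma integrable_equalMixture [Nonempty ι] {E : Type*} [NormedAddCommGroup E] {f : α → E}
    (hf : ∀ i, Integrable f (μ i)) : Integrable f (equalMixture μ) := by
  rw [equalMixture, Measure.sum_fintype]
  exact (integrable_finsetSum_measure.2 fun i _ => hf i).smul_measure
    (ENNReal.inv_ne_top.2 (by simp))

lemma integral_equalMixture {E : Type*} [NormedAddCommGroup E] [NormedSpace ℝ E] {f : α → E}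
    (hf : ∀ i, Integrable f (μ i)) :
    ∫ x, f x ∂equalMixture μ = (Fintype.card ι : ℝ)⁻¹ • ∑ i, ∫ x, f x ∂μ i := by
  rw [equalMixture, Measure.sum_fintype, integral_smul_measure,
    integral_finsetSum_measure fun i _ => hf i, ENNReal.toReal_inv, ENNReal.toReal_natCast]

lemma equalMixture_prod_equalMixture [∀ i, SFinite (μ i)] :
    (equalMixture μ).prod (equalMixture μ) =
      equalMixture fun q : ι × ι => (μ q.1).prod (μ q.2) := by
  rw [equalMixture, equalMixture, Measure.prod_smul_left, Measure.prod_smul_right, Measure.prod_sum,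
    smul_smul, Fintype.card_prod, Nat.cast_mul, ENNReal.mul_inv (by simp) (by simp)]

end Mixtures

section LocalIntegrability

lemma locallyIntegrable_comp_snd {X Y E : Type*} [TopologicalSpace X] [MeasurableSpace X]
    [TopologicalSpace Y] [MeasurableSpace Y] [NormedAddCommGroup E] {μ : Measure X}
    [IsLocallyFiniteMeasure μ] {ν : Measure Y} [SFinite μ] [SFinite ν] {f : Y → E}
    (hf : LocallyIntegrable f ν) : LocallyIntegrable (fun z : X × Y => f z.2) (μ.prod ν) := by
  rintro ⟨x, y⟩
  obtain ⟨s, hs, hμs⟩ := μ.finiteAt_nhds x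
  obtain ⟨t, ht, hft⟩ := hf y
  refine ⟨s ×ˢ t, prod_mem_nhds hs ht, ?_⟩
  have : IsFiniteMeasure (μ.restrict s) := ⟨by simpa using hμs⟩
  rw [IntegrableOn, ← Measure.prod_restrict]
  exact Integrable.comp_snd hft _

lemma locallyIntegrable_comp_neg_add {G E : Type*} [AddGroup G] [TopologicalSpace G]
    [IsTopologicalAddGroup G] [SecondCountableTopology G] [MeasurableSpace G] [BorelSpace G]
    [NormedAddCommGroup E] {μ ν : Measure G} [IsLocallyFiniteMeasure μ] [SFinite μ] [SFinite ν]
    [ν.IsAddLeftInvariant] {f : G → E} (hf : LocallyIntegrable f ν) :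
    LocallyIntegrable (fun z : G × G => f (-z.1 + z.2)) (μ.prod ν) := by
  have hshear := (locallyIntegrable_map_homeomorph (Homeomorph.shearAddRight G).symm
    (f := fun z : G × G => f z.2) (μ := μ.prod ν)).1
  refine hshear ?_
  rw [show ⇑(Homeomorph.shearAddRight G).symm = fun z : G × G => (z.1, -z.1 + z.2) from rfl,
    (measurePreserving_prod_neg_add μ ν).map_eq]
  exact locallyIntegrable_comp_snd hf

lemma locallyIntegrable_log : LocallyIntegrable Real.log := fun x =>
  ⟨Set.Icc (x - 1) (x + 1), Icc_mem_nhds (by linarith) (by linarith),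
    (intervalIntegrable_iff_integrableOn_Icc_of_le (by linarith)).1
      intervalIntegral.intervalIntegrable_log'⟩

lemma locallyIntegrable_log_abs_sub :
    LocallyIntegrable fun z : ℝ × ℝ => Real.log |z.1 - z.2| := by
  have h := locallyIntegrable_comp_neg_add (μ := volume) locallyIntegrable_log
  refine h.congr (.of_forall fun z => ?_)
  beta_reduce
  rw [Real.log_abs, ← Real.log_neg_eq_log (z.1 - z.2), neg_sub, neg_add_eq_sub]

end LocalIntegrability

section LogEnergy

open ProbabilityTheory

lemma volume_Icc_ne_zero {a b : ℝ} (hab : a < b) : volume (Set.Icc a b) ≠ 0 := by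
  simpa using hab

lemma integrable_log_abs_sub_cond_prod {a b c d : ℝ} (hab : a < b) (hcd : c < d) :
    Integrable (fun z : ℝ × ℝ => Real.log |z.1 - z.2|)
      (volume[|Set.Icc a b].prod volume[|Set.Icc c d]) := by
  rw [cond_prod_cond (volume_Icc_ne_zero hab) (volume_Icc_ne_zero hcd)]
  refine integrable_cond ?_
    (locallyIntegrable_log_abs_sub.integrableOn_isCompact (isCompact_Icc.prod isCompact_Icc))
  rw [Measure.prod_prod]
  exact mul_ne_zero (volume_Icc_ne_zero hab) (volume_Icc_ne_zero hcd)

lemma le_integral_log_abs_sub_cond_prod {a b c d r : ℝ} (hab : a < b) (hcd : c < d)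
    (hr : ∀ x ∈ Set.Icc a b, ∀ y ∈ Set.Icc c d, r ≤ Real.log |x - y|) :
    r ≤ ∫ z, Real.log |z.1 - z.2| ∂volume[|Set.Icc a b].prod volume[|Set.Icc c d] := by
  have := cond_isProbabilityMeasure_of_finite (volume_Icc_ne_zero hab) measure_Icc_lt_top.ne
  have := cond_isProbabilityMeasure_of_finite (volume_Icc_ne_zero hcd) measure_Icc_lt_top.ne
  refine (convex_Ici r).integral_mem isClosed_Ici ?_ (integrable_log_abs_sub_cond_prod hab hcd)
  rw [cond_prod_cond (volume_Icc_ne_zero hab) (volume_Icc_ne_zero hcd)]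
  filter_upwards [ae_cond_mem (measurableSet_Icc.prod measurableSet_Icc)] with z hz
  exact hr _ hz.1 _ hz.2

lemma mul_log_half_le_add_mul_log {u v : ℝ} (hu : 0 ≤ u) (hv : 0 ≤ v) :
    (u + v) * Real.log ((u + v) / 2) ≤ u * Real.log u + v * Real.log v := by
  have hhalf : (0 : ℝ) ≤ 1 / 2 := by norm_num
  have h := Real.convexOn_mul_log.2 (Set.mem_Ici.2 hu) (Set.mem_Ici.2 hv) hhalf hhalf (by norm_num)
  simp only [smul_eq_mul] at h
  rw [show 1 / 2 * u + 1 / 2 * v = (u + v) / 2 by ring] at h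
  linarith

lemma le_integral_log_abs_sub_cond {a b x : ℝ} (hab : a < b) (hx : x ∈ Set.Icc a b) :
    Real.log (b - a) - Real.log 2 - 1 ≤ ∫ y, Real.log |x - y| ∂volume[|Set.Icc a b] := by
  have hlen : 0 < b - a := sub_pos.2 hab
  have hint : ∫ y in Set.Icc a b, Real.log |x - y| =
      (x - a) * Real.log (x - a) + (b - x) * Real.log (b - x) - (b - a) := by
    rw [integral_Icc_eq_integral_Ioc, ← intervalIntegral.integral_of_le hab.le]
    simp only [Real.log_abs]
    rw [intervalIntegral.integral_comp_sub_left (fun s => Real.log s) x, integral_log,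
      ← neg_sub b x, Real.log_neg_eq_log]
    ring
  have hconvex := mul_log_half_le_add_mul_log (sub_nonneg.2 hx.1) (sub_nonneg.2 hx.2)
  rw [add_comm, sub_add_sub_cancel, Real.log_div hlen.ne' two_ne_zero] at hconvex
  rw [ProbabilityTheory.cond, integral_smul_measure, hint, Real.volume_Icc, ENNReal.toReal_inv,
    ENNReal.toReal_ofReal hlen.le, smul_eq_mul, le_inv_mul_iff₀ hlen]
  linarith

lemma le_integral_log_abs_sub_cond_prod_self {a b : ℝ} (hab : a < b) :
    Real.log (b - a) - Real.log 2 - 1 ≤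
      ∫ z, Real.log |z.1 - z.2| ∂volume[|Set.Icc a b].prod volume[|Set.Icc a b] := by
  have := cond_isProbabilityMeasure_of_finite (volume_Icc_ne_zero hab) measure_Icc_lt_top.ne
  have hint := integrable_log_abs_sub_cond_prod hab hab
  rw [integral_prod _ hint]
  refine (convex_Ici _).integral_mem isClosed_Ici ?_ hint.integral_prod_left
  filter_upwards [ae_cond_mem measurableSet_Icc] with x hx
  exact le_integral_log_abs_sub_cond hab hx

lemma logEnergy_eq_integral {μ : Measure ℝ}
    (h : Integrable (fun z : ℝ × ℝ => Real.log |z.1 - z.2|) (μ.prod μ)) :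
    logEnergy μ = (∫ z, Real.log |z.1 - z.2| ∂μ.prod μ : ℝ) := by
  have hneg : ∫⁻ z : ℝ × ℝ, ENNReal.ofReal (-Real.log |z.1 - z.2|) ∂μ.prod μ ≠ ∞ :=
    h.neg.lintegral_lt_top.ne
  rw [logEnergy, integral_eq_lintegral_pos_part_sub_lintegral_neg_part h, EReal.coe_sub,
    EReal.coe_ennreal_toReal hneg]

lemma logEnergy_equalMixture {ι : Type*} [Fintype ι] [Nonempty ι] {μ : ι → Measure ℝ}
    [∀ i, SFinite (μ i)]
    (h : ∀ i j, Integrable (fun z : ℝ × ℝ => Real.log |z.1 - z.2|) ((μ i).prod (μ j))) :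
    logEnergy (equalMixture μ) = (((Fintype.card ι : ℝ) ^ 2)⁻¹ *
      ∑ i, ∑ j, ∫ z, Real.log |z.1 - z.2| ∂(μ i).prod (μ j) : ℝ) := by
  have hpair (q : ι × ι) := h q.1 q.2
  rw [logEnergy_eq_integral, equalMixture_prod_equalMixture, integral_equalMixture hpair,
    Fintype.card_prod, Nat.cast_mul, ← sq, smul_eq_mul, Fintype.sum_prod_type]
  rw [equalMixture_prod_equalMixture]
  exact integrable_equalMixture hpair

end LogEnergy

section Smearing

open ProbabilityTheory

/-- The `i`-th block of the smearing of `t` at scale `h`: an interval of length `h` to the right of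
`t i`, moved `i * h` further so that points of different blocks are at least as far apart as the
corresponding entries of `t`. -/
def block {n : ℕ} (t : Fin n → ℝ) (h : ℝ) (i : Fin n) : Set ℝ :=
  Set.Icc (t i + i * h) (t i + i * h + h)

/-- The absolutely continuous approximation of the empirical measure of `t`, in which the atom at
`t i` is replaced by the uniform distribution on `block t h i`. -/
noncomputable def smear {n : ℕ} (t : Fin n → ℝ) (h : ℝ) : Measure ℝ :=
  equalMixture fun i => volume[|block t h i]

variable {n : ℕ} {t : Fin n → ℝ} {h p : ℝ}

lemma isProbabilityMeasure_cond_block (hh : 0 < h) (i : Fin n) :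
    IsProbabilityMeasure volume[|block t h i] :=
  cond_isProbabilityMeasure_of_finite (volume_Icc_ne_zero (lt_add_of_pos_right _ hh))
    measure_Icc_lt_top.ne

lemma le_of_mem_block (hh : 0 ≤ h) {i : Fin n} {x : ℝ} (hx : x ∈ block t h i) : t i ≤ x :=
  (le_add_of_nonneg_right (by positivity)).trans hx.1

lemma le_add_of_mem_block (hh : 0 ≤ h) {i : Fin n} {x : ℝ} (hx : x ∈ block t h i) :
    x ≤ t i + n * h := by
  have hi : (i : ℝ) + 1 ≤ n := by exact_mod_cast i.2
  have := mul_le_mul_of_nonneg_right hi hh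
  linarith [hx.2]

lemma sub_le_sub_of_mem_block (hh : 0 ≤ h) {i j : Fin n} (hij : i < j) {x y : ℝ}
    (hx : x ∈ block t h i) (hy : y ∈ block t h j) : t j - t i ≤ y - x := by
  have hi : (i : ℝ) + 1 ≤ j := by exact_mod_cast hij
  have := mul_le_mul_of_nonneg_right hi hh
  linarith [hx.2, hy.1]

lemma log_abs_sub_le_of_mem_block (ht : StrictMono t) (hh : 0 ≤ h) {i j : Fin n} (hij : i ≠ j)
    {x y : ℝ} (hx : x ∈ block t h i) (hy : y ∈ block t h j) :
    Real.log |t i - t j| ≤ Real.log |x - y| := by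
  wlog hlt : i < j generalizing i j x y
  · rw [abs_sub_comm, abs_sub_comm x]
    exact this hij.symm hy hx (hij.lt_or_gt.resolve_left hlt)
  have hpos : 0 < t j - t i := sub_pos.2 (ht hlt)
  have hsep := sub_le_sub_of_mem_block hh hlt hx hy
  rw [abs_sub_comm, abs_sub_comm x, abs_of_pos hpos, abs_of_pos (hpos.trans_le hsep)]
  exact Real.log_le_log hpos hsep

lemma le_logEnergy_smear (hn : n ≠ 0) (ht : StrictMono t) (hh : 0 < h) :
    (((n : ℝ) ^ 2)⁻¹ * (tupleEnergy t + n * (Real.log h - Real.log 2 - 1)) : ℝ)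
      ≤ logEnergy (smear t h) := by
  have : NeZero n := ⟨hn⟩
  have := isProbabilityMeasure_cond_block (t := t) hh
  have hlen (i : Fin n) : t i + i * h < t i + i * h + h := lt_add_of_pos_right _ hh
  have hint (i j : Fin n) : Integrable (fun z : ℝ × ℝ => Real.log |z.1 - z.2|)
      (volume[|block t h i].prod volume[|block t h j]) :=
    integrable_log_abs_sub_cond_prod (hlen i) (hlen j)
  have hpair (i j : Fin n) :
      Real.log |t i - t j| + (if i = j then Real.log h - Real.log 2 - 1 else 0) ≤
        ∫ z, Real.log |z.1 - z.2| ∂volume[|block t h i].prod volume[|block t h j] := by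
    rcases eq_or_ne i j with rfl | hij
    · simpa [block] using le_integral_log_abs_sub_cond_prod_self (hlen i)
    · simpa [block, hij] using le_integral_log_abs_sub_cond_prod (hlen i) (hlen j) fun x hx y hy =>
        log_abs_sub_le_of_mem_block ht hh.le hij hx hy
  rw [smear, logEnergy_equalMixture hint, EReal.coe_le_coe_iff, Fintype.card_fin]
  gcongr
  calc tupleEnergy t + n * (Real.log h - Real.log 2 - 1)
      = ∑ i : Fin n, ∑ j : Fin n,
          (Real.log |t i - t j| + if i = j then Real.log h - Real.log 2 - 1 else 0) := by
        simp only [tupleEnergy, Finset.sum_add_distrib, Finset.sum_ite_eq, Finset.mem_univ, if_true,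
          Finset.sum_const, Finset.card_fin, nsmul_eq_mul]
    _ ≤ _ := Finset.sum_le_sum fun i _ => Finset.sum_le_sum fun j _ => hpair i j

lemma integrable_abs_rpow_cond_block (hp : 0 ≤ p) (hh : 0 < h) (i : Fin n) :
    Integrable (fun x => |x| ^ p) volume[|block t h i] :=
  integrable_cond (volume_Icc_ne_zero (lt_add_of_pos_right _ hh))
    (continuous_abs.rpow_const fun _ => .inr hp).integrableOn_Icc

lemma integral_abs_rpow_smear_le (hp : 0 ≤ p) (ht : ∀ i, 0 ≤ t i) (hh : 0 < h) :
    ∫ x, |x| ^ p ∂smear t h ≤ tupleMoment p fun i => t i + n * h := by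
  rw [smear, integral_equalMixture (integrable_abs_rpow_cond_block hp hh), Fintype.card_fin,
    smul_eq_mul, tupleMoment, one_div]
  gcongr with i
  have := isProbabilityMeasure_cond_block (t := t) hh i
  refine (convex_Iic _).integral_mem isClosed_Iic ?_ (integrable_abs_rpow_cond_block hp hh i)
  filter_upwards [ae_cond_mem measurableSet_Icc] with x hx
  have hx0 : 0 ≤ x := (ht i).trans (le_of_mem_block hh.le hx)
  rw [abs_of_nonneg hx0]
  exact Real.rpow_le_rpow hx0 (le_add_of_mem_block hh.le hx) hp

lemma smear_absolutelyContinuous (t : Fin n → ℝ) (h : ℝ) : smear t h ≪ volume :=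
  fun _ hs => equalMixture_apply_eq_zero fun _ => cond_absolutelyContinuous hs

lemma ne_dirac_of_absolutelyContinuous {μ : Measure ℝ} (hμ : μ ≪ volume) (x : ℝ) :
    μ ≠ Measure.dirac x := by
  rintro rfl
  simpa using hμ (Real.volume_singleton (a := x))

lemma memM1pPos_smear (hp : 0 ≤ p) (hn : n ≠ 0) (ht : ∀ i, 0 ≤ t i) (hh : 0 < h) :
    MemM1pPos p (smear t h) := by
  have : NeZero n := ⟨hn⟩
  have := isProbabilityMeasure_cond_block (t := t) hh
  refine ⟨isProbabilityMeasure_equalMixture, equalMixture_apply_eq_zero fun i => ?_,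
    (integrable_equalMixture (integrable_abs_rpow_cond_block hp hh)).lintegral_lt_top,
    ne_dirac_of_absolutelyContinuous (smear_absolutelyContinuous t h) 0⟩
  have hnonneg : ∀ᵐ x ∂volume[|block t h i], 0 ≤ x := by
    filter_upwards [ae_cond_mem measurableSet_Icc] with x hx
    exact (ht i).trans (le_of_mem_block hh.le hx)
  simpa [ae_iff, Set.Iio] using hnonneg

end Smearing

section Approximation

variable {p h η : ℝ} {n : ℕ} {t : Fin n → ℝ}

lemma add_rpow_le {x δ : ℝ} (hp : 0 ≤ p) (hx : 0 ≤ x) (hδ : 0 ≤ δ) (hη : 0 < η) :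
    (x + δ) ^ p ≤ (1 + δ / η) ^ p * (x ^ p + η ^ p) := by
  have hscale : x + δ ≤ (1 + δ / η) * max x η :=
    calc x + δ = x + δ / η * η := by rw [div_mul_cancel₀ _ hη.ne']
      _ ≤ max x η + δ / η * max x η := by gcongr <;> simp
      _ = (1 + δ / η) * max x η := by ring
  have hmax : max x η ^ p ≤ x ^ p + η ^ p := by
    rw [(Real.monotoneOn_rpow_Ici_of_exponent_nonneg hp).map_max hx hη.le]
    exact max_le_add_of_nonneg (by positivity) (by positivity)
  calc (x + δ) ^ p ≤ ((1 + δ / η) * max x η) ^ p := by gcongr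
    _ = (1 + δ / η) ^ p * max x η ^ p := Real.mul_rpow (by positivity) (by positivity)
    _ ≤ (1 + δ / η) ^ p * (x ^ p + η ^ p) := by gcongr

lemma tupleMoment_add_le {δ : ℝ} (hp : 0 ≤ p) (hn : n ≠ 0) (ht : ∀ i, 0 ≤ t i) (hδ : 0 ≤ δ)
    (hη : 0 < η) :
    tupleMoment p (fun i => t i + δ) ≤ (1 + δ / η) ^ p * (tupleMoment p t + η ^ p) :=
  calc tupleMoment p (fun i => t i + δ)
      ≤ (1 / n) * ∑ i, (1 + δ / η) ^ p * (t i ^ p + η ^ p) := by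
        unfold tupleMoment
        gcongr with i
        exact add_rpow_le hp (ht i) hδ hη
    _ = (1 + δ / η) ^ p * (tupleMoment p t + η ^ p) := by
        rw [← Finset.mul_sum, Finset.sum_add_distrib, Finset.sum_const, Finset.card_fin,
          nsmul_eq_mul, tupleMoment]
        field_simp

lemma integral_abs_rpow_pos {μ : Measure ℝ} [NeZero μ] (hμ : μ {0} = 0)
    (hint : Integrable (fun x => |x| ^ p) μ) : 0 < ∫ x, |x| ^ p ∂μ := by
  rw [integral_pos_iff_support_of_nonneg (fun x => by positivity) hint]
  have hsupp : ({0} : Set ℝ)ᶜ ⊆ Function.support fun x : ℝ => |x| ^ p := fun x hx =>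
    (Real.rpow_pos_of_pos (abs_pos.2 hx) p).ne'
  refine lt_of_lt_of_le ?_ (measure_mono hsupp)
  rw [measure_compl (measurableSet_singleton 0) (by simp [hμ]), hμ, tsub_zero]
  exact pos_iff_ne_zero.2 (NeZero.ne _)

lemma le_Jfun_smear (hp : 0 < p) (hn : n ≠ 0) (ht : t ∈ orderedTuples n) (hh : 0 < h)
    (hη : 0 < η) :
    (((n : ℝ) ^ 2)⁻¹ * (tupleEnergy t + n * (Real.log h - Real.log 2 - 1))
      - (Real.log (1 + n * h / η) + (1 / p) * Real.log (tupleMoment p t + η ^ p)) : ℝ)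
      ≤ Jfun p (smear t h) := by
  have hpos : 0 < ∫ x, |x| ^ p ∂smear t h := by
    have : NeZero n := ⟨hn⟩
    have := isProbabilityMeasure_cond_block (t := t) hh
    have : IsProbabilityMeasure (smear t h) := isProbabilityMeasure_equalMixture
    exact integral_abs_rpow_pos (smear_absolutelyContinuous t h Real.volume_singleton)
      (integrable_equalMixture (integrable_abs_rpow_cond_block hp.le hh))
  have hmoment : 0 ≤ tupleMoment p t :=
    mul_nonneg (by positivity) (Finset.sum_nonneg fun i _ => Real.rpow_nonneg (ht.1 i) p)
  have hlog : (1 / p) * Real.log (∫ x, |x| ^ p ∂smear t h) ≤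
      Real.log (1 + n * h / η) + (1 / p) * Real.log (tupleMoment p t + η ^ p) :=
    calc (1 / p) * Real.log (∫ x, |x| ^ p ∂smear t h)
        ≤ (1 / p) * Real.log ((1 + n * h / η) ^ p * (tupleMoment p t + η ^ p)) := by
          gcongr
          exact (integral_abs_rpow_smear_le hp.le ht.1 hh).trans
            (tupleMoment_add_le hp.le hn ht.1 (by positivity) hη)
      _ = Real.log (1 + n * h / η) + (1 / p) * Real.log (tupleMoment p t + η ^ p) := by
          rw [Real.log_mul (by positivity) (by positivity), Real.log_rpow (by positivity)]
          field_simp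
  rw [EReal.coe_sub, Jfun]
  exact EReal.sub_le_sub (le_logEnergy_smear hn ht.2 hh) (EReal.coe_le_coe_iff.2 hlog)

/-- The loss in `𝒥_p` when an `n`-tuple `t` is smeared at the scale `M / n ^ 3`, where `M` is the
`L^p` norm of its empirical measure: the three terms come from the diagonal blocks, from the
displacement of the blocks, and from comparing the entries of `t` with `M / n`. -/
noncomputable def smoothingLoss (p : ℝ) (n : ℕ) : ℝ :=
  (3 * Real.log n + Real.log 2 + 1) / n + Real.log (1 + 1 / n)
    + (1 / p) * Real.log (1 + (1 / n : ℝ) ^ p)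

lemma tendsto_smoothingLoss (hp : 0 < p) :
    Tendsto (fun n : ℕ => smoothingLoss p n) atTop (nhds 0) := by
  have hinv : Tendsto (fun n : ℕ => (1 : ℝ) / n) atTop (nhds 0) :=
    tendsto_one_div_atTop_nhds_zero_nat
  have hlog : Tendsto (fun n : ℕ => Real.log n / n) atTop (nhds 0) :=
    (Real.isLittleO_log_id_atTop.tendsto_div_nhds_zero).comp tendsto_natCast_atTop_atTop
  have hdiag : Tendsto (fun n : ℕ => (3 * Real.log n + Real.log 2 + 1) / n) atTop (nhds 0) := by
    have := (hlog.const_mul 3).add (hinv.const_mul (Real.log 2 + 1))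
    simp only [mul_zero, add_zero] at this
    exact this.congr fun n => by ring
  have hshift : Tendsto (fun n : ℕ => Real.log (1 + 1 / n)) atTop (nhds 0) := by
    simpa using (hinv.const_add 1).log (by norm_num)
  have hscale : Tendsto (fun n : ℕ => 1 / p * Real.log (1 + (1 / n : ℝ) ^ p)) atTop (nhds 0) := by
    have h := (hinv.rpow_const (.inr hp.le)).const_add 1
    rw [Real.zero_rpow hp.ne', add_zero] at h
    simpa using (h.log one_ne_zero).const_mul (1 / p)
  simpa [smoothingLoss] using (hdiag.add hshift).add hscale

lemma exists_le_Jfun_smear (hp : 0 < p) (hn : 2 ≤ n) (ht : t ∈ orderedTuples n) :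
    ∃ h > 0, ((1 - 1 / n) * tupleJ p t - smoothingLoss p n : ℝ) ≤ Jfun p (smear t h) := by
  have hn' : (2 : ℝ) ≤ n := by exact_mod_cast hn
  have hn1 : (n : ℝ) - 1 ≠ 0 := by linarith
  have hmoment : 0 < tupleMoment p t := tupleMoment_pos hn ht
  set M : ℝ := tupleMoment p t ^ (1 / p) with hM
  have hMpos : 0 < M := Real.rpow_pos_of_pos hmoment _
  have hlogM : 1 / p * Real.log (tupleMoment p t) = Real.log M := (Real.log_rpow hmoment _).symm
  have hlogh : Real.log (M / n ^ 3) = Real.log M - 3 * Real.log n := by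
    rw [Real.log_div (by positivity) (by positivity), Real.log_pow, Nat.cast_ofNat]
  have hratio : n * (M / n ^ 3) / (M / n) = 1 / n := by field_simp
  have hscale : tupleMoment p t + (M / n) ^ p = tupleMoment p t * (1 + (1 / n : ℝ) ^ p) := by
    rw [div_eq_mul_one_div, Real.mul_rpow hMpos.le (by positivity), hM,
      ← Real.rpow_mul hmoment.le, one_div_mul_cancel hp.ne', Real.rpow_one]
    ring
  refine ⟨M / n ^ 3, by positivity,
    le_of_eq_of_le ?_ (le_Jfun_smear hp (by lia) ht (by positivity) (η := M / n) (by positivity))⟩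
  rw [hratio, hscale, hlogh, Real.log_mul hmoment.ne' (by positivity), mul_add (1 / p), hlogM,
    tupleJ, hlogM, smoothingLoss, EReal.coe_eq_coe_iff]
  field_simp
  ring

lemma exists_le_Jfun_of_lt_logDeltaN {c : ℝ} (hp : 0 < p) (hn : 2 ≤ n)
    (hc : c < logDeltaN p n) :
    ∃ ν : Measure ℝ, (MemM1pPos p ν ∧ ν ≪ volume) ∧
      ((1 - 1 / n) * c - smoothingLoss p n : ℝ) ≤ Jfun p ν := by
  rw [logDeltaN_eq_sSup_image] at hc
  obtain ⟨_, ⟨t, ht, rfl⟩, hct⟩ := exists_lt_of_lt_csSup (nonempty_image_orderedTuples p n) hc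
  obtain ⟨h, hh, hJ⟩ := exists_le_Jfun_smear hp hn ht
  refine ⟨smear t h, ⟨memM1pPos_smear hp.le (by lia) ht.1 hh, smear_absolutelyContinuous t h⟩,
    le_trans (EReal.coe_le_coe_iff.2 ?_) hJ⟩
  have hweight : (0 : ℝ) ≤ 1 - 1 / n := by
    rw [one_div, sub_nonneg]
    exact Nat.cast_inv_le_one n
  gcongr

end Approximation

/-- For every `0 < p < ∞`, there is a sequence of absolutely continuous probability measures
`ν_k ∈ M_1^p(ℝ_+) \ {δ_0}` with `liminf_{k→∞} 𝒥_p(ν_k) ≥ lim_{n→∞} log Δ_n(p)`. -/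
theorem exists_seq_Jfun_liminf_ge (p : ℝ) (hp : 0 < p) :
    ∃ ν : ℕ → Measure ℝ, (∀ k, MemM1pPos p (ν k) ∧ ν k ≪ volume) ∧
      ∃ L : ℝ, Tendsto (fun n => logDeltaN p n) atTop (nhds L) ∧
        (L : EReal) ≤ liminf (fun k => Jfun p (ν k)) atTop := by
  obtain ⟨L, hL, hle⟩ := exists_tendsto_logDeltaN hp
  have hlt (k : ℕ) : L - 1 / (k + 2 : ℕ) < logDeltaN p (k + 2) :=
    (sub_lt_self L (by positivity)).trans_le (hle (k + 2) (by lia))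
  choose ν hν hJ using fun k => exists_le_Jfun_of_lt_logDeltaN hp (by lia) (hlt k)
  refine ⟨ν, hν, L, hL, ?_⟩
  have hinv : Tendsto (fun n : ℕ => (1 : ℝ) / n) atTop (nhds 0) :=
    tendsto_one_div_atTop_nhds_zero_nat
  have hbound : Tendsto (fun n : ℕ => (1 - 1 / (n : ℝ)) * (L - 1 / n) - smoothingLoss p n)
      atTop (nhds L) := by
    simpa using ((hinv.const_sub 1).mul (hinv.const_sub L)).sub (tendsto_smoothingLoss hp)
  have hbound' := continuous_coe_real_ereal.continuousAt.tendsto.comp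
    (hbound.comp (tendsto_add_atTop_nat 2))
  rw [← hbound'.liminf_eq]
  exact liminf_le_liminf (Eventually.of_forall hJ)
end

section
/- Let 0 < p < ∞ and let U and V be independent random variables, each with the Ullman distribution with parameter p. Then E log|U − V| = ∫_{−1}^1 ∫_{−1}^1 h_p(x) h_p(y) log|x − y| dx dy = −log 2 − 1/(2p). -/
open MeasureTheory Filter
open scoped ENNReal

/-- The Ullman density with parameter `p`:
`h_p(x) = (p/π) ∫_{|x|}^1 t^{p-1}/√(t²-x²) dt` for `|x| ≤ 1`, and `0` otherwise. -/
noncomputable def ullmanDensity (p : ℝ) (x : ℝ) : ℝ :=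
  if |x| ≤ 1 then
    (p / Real.pi) * ∫ t in Set.Ioc |x| 1, t ^ (p - 1) / Real.sqrt (t ^ 2 - x ^ 2)
  else 0

/-- The Ullman distribution with parameter `p`: the measure on `ℝ` with Lebesgue density
`ullmanDensity p`. -/
noncomputable def ullmanMeasure (p : ℝ) : Measure ℝ :=
  volume.withDensity fun x => ENNReal.ofReal (ullmanDensity p x)

/-!
The Ullman law is the law of `R * X`, where `X` has the arcsine law and `R` is independent of `X`
with `P(R ≤ t) = t ^ p` on `[0, 1]`; that is, it is the law of the real part of a uniform point on a
circle of random radius `R`. For two points `z`, `w` of the circle of radius `r` one has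
`|z - w| |z - conj w| = 2 r |re z - re w|`, and the circle average of `log |z - w|` is `log r`, so
`log |x - re z|` has circle average `log (r / 2)` for every `|x| ≤ r`. Hence two independent points
on circles of radii `t` and `s` have logarithmic energy `log (max t s / 2)`. Finally, the maximum of
two independent copies of `R` has distribution function `t ^ (2 * p)`, and therefore the expectation
of its logarithm is `-1 / (2 * p)`.
-/

section

open Real Set ProbabilityTheory
open scoped ComplexConjugate

-- `C - f` is nonnegative, so Tonelli's theorem applies to it.
lemma integrable_prod_of_le {α β : Type*} [MeasurableSpace α] [MeasurableSpace β] {μ : Measure α}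
    {ν : Measure β} [IsFiniteMeasure μ] [IsFiniteMeasure ν] {f : α × β → ℝ} {C : ℝ}
    (hf : AEStronglyMeasurable f (μ.prod ν)) (hle : ∀ᵐ q ∂μ.prod ν, f q ≤ C)
    (hslice : ∀ᵐ x ∂μ, Integrable (fun y => f (x, y)) ν)
    (hint : Integrable (fun x => ∫ y, f (x, y) ∂ν) μ) : Integrable f (μ.prod ν) := by
  suffices Integrable ((fun _ => C) - f) (μ.prod ν) by
    simpa only [sub_sub_cancel] using (integrable_const C).sub this
  refine (integrable_prod_iff (aestronglyMeasurable_const.sub hf)).2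
    ⟨hslice.mono fun x hx => (integrable_const C).sub hx, ?_⟩
  refine ((integrable_const (∫ _, C ∂ν)).sub hint).congr ?_
  filter_upwards [hslice, Measure.ae_ae_of_ae_prod hle] with x hx hlex
  rw [Pi.sub_apply, ← integral_sub (integrable_const C) hx]
  exact integral_congr_ae <| hlex.mono fun y hy => (norm_of_nonneg (sub_nonneg.2 hy)).symm

lemma prod_mconv_prod {M N : Type*} [Monoid M] [MeasurableSpace M] [MeasurableMul₂ M] [Monoid N]
    [MeasurableSpace N] [MeasurableMul₂ N] (μ₁ ν₁ : Measure M) (μ₂ ν₂ : Measure N)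
    [SFinite μ₁] [SFinite ν₁] [SFinite μ₂] [SFinite ν₂] :
    (μ₁ ∗ₘ ν₁).prod (μ₂ ∗ₘ ν₂) = μ₁.prod μ₂ ∗ₘ ν₁.prod ν₂ := by
  have : MeasurableMul₂ (M × N) :=
    ⟨(measurable_fst.fst.mul measurable_snd.fst).prodMk (measurable_fst.snd.mul measurable_snd.snd)⟩
  refine Measure.ext_of_lintegral _ fun f hf => ?_
  calc ∫⁻ q, f q ∂(μ₁ ∗ₘ ν₁).prod (μ₂ ∗ₘ ν₂)
      = ∫⁻ x₁, ∫⁻ y₁, ∫⁻ x₂, ∫⁻ y₂, f (x₁ * y₁, x₂ * y₂) ∂ν₂ ∂μ₂ ∂ν₁ ∂μ₁ := by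
        rw [lintegral_prod _ hf.aemeasurable, Measure.lintegral_mconv hf.lintegral_prod_right']
        refine lintegral_congr fun x₁ => lintegral_congr fun y₁ => ?_
        exact Measure.lintegral_mconv (hf.comp measurable_prodMk_left)
    _ = ∫⁻ x₁, ∫⁻ x₂, ∫⁻ y₁, ∫⁻ y₂, f (x₁ * y₁, x₂ * y₂) ∂ν₂ ∂ν₁ ∂μ₂ ∂μ₁ :=
        lintegral_congr fun x₁ => lintegral_lintegral_swap
          (Measurable.lintegral_prod_right' (f := fun r : (M × N) × N =>
            f (x₁ * r.1.1, r.1.2 * r.2)) (by fun_prop)).aemeasurable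
    _ = ∫⁻ q, f q ∂(μ₁.prod μ₂ ∗ₘ ν₁.prod ν₂) := by
        rw [Measure.lintegral_mconv hf, lintegral_prod _
          (Measurable.lintegral_prod_right' (f := fun r : (M × N) × M × N =>
            f (r.1 * r.2)) (by fun_prop)).aemeasurable]
        refine lintegral_congr fun x₁ => lintegral_congr fun x₂ => ?_
        exact (lintegral_prod (fun y => f ((x₁, x₂) * y)) (by fun_prop)).symm

/-! ### Logarithmic potential of a circle -/

lemma norm_sub_mul_norm_sub_conj {z w : ℂ} (h : ‖z‖ = ‖w‖) :
    ‖z - w‖ * ‖z - conj w‖ = 2 * ‖z‖ * |w.re - z.re| := by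
  have hmul : w * conj w = z * conj z := by
    rw [Complex.mul_conj', Complex.mul_conj', h]
  have hfactor : (z - w) * (z - conj w) = 2 * z * ((z.re - w.re : ℝ) : ℂ) := by
    rw [Complex.ofReal_sub, Complex.re_eq_add_conj, Complex.re_eq_add_conj]
    linear_combination hmul
  rw [← norm_mul, hfactor, norm_mul, norm_mul, Complex.norm_real, Complex.norm_ofNat,
    Real.norm_eq_abs, abs_sub_comm]

lemma exists_norm_eq_re_eq {x r : ℝ} (h : |x| ≤ r) : ∃ w : ℂ, ‖w‖ = r ∧ w.re = x := by
  have hsq : x ^ 2 ≤ r ^ 2 := sq_le_sq' (abs_le.1 h).1 (abs_le.1 h).2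
  refine ⟨⟨x, √(r ^ 2 - x ^ 2)⟩, ?_, rfl⟩
  rw [Complex.norm_eq_sqrt_sq_add_sq, Real.sq_sqrt (sub_nonneg.2 hsq), add_sub_cancel,
    Real.sqrt_sq ((abs_nonneg x).trans h)]

lemma log_norm_sub_add_log_norm_sub_conj_eventuallyEq {w : ℂ} (hw : w ≠ 0) :
    (fun z => log ‖z - w‖ + log ‖z - conj w‖ - log (2 * ‖w‖))
      =ᶠ[codiscreteWithin (Metric.sphere 0 ‖w‖)] fun z => log |w.re - z.re| := by
  filter_upwards [self_mem_codiscreteWithin _,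
    compl_finite_mem_codiscreteWithin (toFinite {w, conj w})] with z hz hne
  simp only [mem_compl_iff, mem_insert_iff, mem_singleton_iff, not_or, ← sub_eq_zero (a := z),
    ← norm_eq_zero (a := z - _)] at hne
  have hprod := norm_sub_mul_norm_sub_conj (mem_sphere_zero_iff_norm.1 hz)
  have hw0 : 2 * ‖w‖ ≠ 0 := mul_ne_zero two_ne_zero (norm_ne_zero_iff.2 hw)
  rw [mem_sphere_zero_iff_norm.1 hz] at hprod
  rw [← log_mul hne.1 hne.2, hprod, log_mul hw0, add_sub_cancel_left]
  exact right_ne_zero_of_mul (hprod ▸ mul_ne_zero hne.1 hne.2)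

lemma circleAverage_log_abs_sub_re {x r : ℝ} (hr : 0 < r) (hx : |x| ≤ r) :
    CircleIntegrable (fun z => log |x - z.re|) 0 r ∧
      circleAverage (fun z => log |x - z.re|) 0 r = log (r / 2) := by
  obtain ⟨w, rfl, rfl⟩ := exists_norm_eq_re_eq hx
  have hsum : CircleIntegrable (fun z => log ‖z - w‖ + log ‖z - conj w‖) 0 ‖w‖ :=
    (circleIntegrable_log_norm_sub_const _).add (circleIntegrable_log_norm_sub_const _)
  have hcongr := log_norm_sub_add_log_norm_sub_conj_eventuallyEq (norm_pos_iff.1 hr)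
  rw [← abs_of_pos hr] at hcongr
  refine ⟨(hsum.sub (circleIntegrable_const _ _ _)).congr_codiscreteWithin hcongr, ?_⟩
  rw [← circleAverage_congr_codiscreteWithin hcongr hr.ne',
    circleAverage_fun_sub hsum (circleIntegrable_const _ _ _),
    circleAverage_fun_add (circleIntegrable_log_norm_sub_const _)
      (circleIntegrable_log_norm_sub_const _), circleAverage_const,
    circleAverage_log_norm_sub_const_of_mem_closedBall (by simp),
    circleAverage_log_norm_sub_const_of_mem_closedBall (by simp),
    abs_norm, log_mul two_ne_zero hr.ne', log_div hr.ne' two_ne_zero]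
  ring

/-! ### The arcsine law -/

/-- The arcsine law on `[-1, 1]`: the distribution of `cos θ` for `θ` uniform on `(0, π]`. -/
noncomputable def arcsineMeasure : Measure ℝ :=
  ENNReal.ofReal π⁻¹ • (volume.restrict (Ioc 0 π)).map cos

instance isProbabilityMeasure_arcsineMeasure : IsProbabilityMeasure arcsineMeasure where
  measure_univ := by
    rw [arcsineMeasure, Measure.smul_apply, Measure.map_apply measurable_cos .univ, preimage_univ,
      Measure.restrict_apply_univ, Real.volume_Ioc, sub_zero, smul_eq_mul,
      ← ENNReal.ofReal_mul (inv_nonneg.2 pi_nonneg), inv_mul_cancel₀ pi_ne_zero,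
      ENNReal.ofReal_one]

lemma ae_arcsineMeasure_abs_le_one : ∀ᵐ y ∂arcsineMeasure, |y| ≤ 1 := by
  refine Measure.ae_smul_measure ?_ _
  rw [ae_map_iff (by fun_prop) (by measurability)]
  exact ae_of_all _ abs_cos_le_one

lemma integrable_arcsineMeasure_iff {f : ℝ → ℝ} (hf : Measurable f) :
    Integrable f arcsineMeasure ↔ IntervalIntegrable (fun θ => f (cos θ)) volume 0 π := by
  rw [arcsineMeasure, integrable_smul_measure (by simp [pi_pos]) ENNReal.ofReal_ne_top,
    integrable_map_measure hf.aestronglyMeasurable (by fun_prop),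
    intervalIntegrable_iff_integrableOn_Ioc_of_le pi_nonneg]
  rfl

lemma integral_arcsineMeasure {f : ℝ → ℝ} (hf : Measurable f) :
    ∫ y, f y ∂arcsineMeasure = π⁻¹ * ∫ θ in 0..π, f (cos θ) := by
  rw [arcsineMeasure, integral_smul_measure, ENNReal.toReal_ofReal (inv_nonneg.2 pi_nonneg),
    integral_map (by fun_prop) hf.aestronglyMeasurable,
    intervalIntegral.integral_of_le pi_nonneg, smul_eq_mul]

lemma integral_mul_arcsineMeasure_eq_circleAverage {f : ℝ → ℝ} {r : ℝ} (hf : Measurable f)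
    (hint : CircleIntegrable (fun z => f z.re) 0 r) :
    Integrable (fun y => f (r * y)) arcsineMeasure ∧
      ∫ y, f (r * y) ∂arcsineMeasure = circleAverage (fun z => f z.re) 0 r := by
  have hre (θ : ℝ) : (circleMap 0 r θ).re = r * cos θ := by simp [circleMap_zero]
  have hmeas : Measurable fun y => f (r * y) := by fun_prop
  simp only [CircleIntegrable, hre] at hint
  have hupper : IntervalIntegrable (fun θ => f (r * cos θ)) volume 0 π :=
    hint.mono_set (uIcc_subset_uIcc_left (by simp [pi_nonneg, two_mul]))
  have hlower : IntervalIntegrable (fun θ => f (r * cos θ)) volume π (2 * π) :=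
    hint.mono_set (uIcc_subset_uIcc_right (by simp [pi_nonneg, two_mul]))
  -- The reflection `θ ↦ 2π - θ` exchanges the two half circles.
  have hreflect : ∫ θ in π..(2 * π), f (r * cos θ) = ∫ θ in 0..π, f (r * cos θ) := by
    have := intervalIntegral.integral_comp_sub_left (a := 0) (b := π)
      (fun θ => f (r * cos θ)) (2 * π)
    simp only [cos_two_pi_sub] at this
    rw [this, sub_zero, two_mul, add_sub_cancel_right]
  refine ⟨(integrable_arcsineMeasure_iff hmeas).2 hupper, ?_⟩
  simp only [integral_arcsineMeasure hmeas, circleAverage_def, hre, smul_eq_mul,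
    ← intervalIntegral.integral_add_adjacent_intervals hupper hlower, hreflect]
  field_simp
  ring

lemma log_potential_arcsineMeasure {t x : ℝ} (ht : 0 < t) (hx : |x| ≤ t) :
    Integrable (fun y => log |x - t * y|) arcsineMeasure ∧
      ∫ y, log |x - t * y| ∂arcsineMeasure = log (t / 2) := by
  obtain ⟨hint, havg⟩ := circleAverage_log_abs_sub_re ht hx
  rw [← havg]
  exact integral_mul_arcsineMeasure_eq_circleAverage (f := fun u => log |x - u|) (by fun_prop) hint

lemma log_abs_mul_sub_mul_le {t s y z : ℝ} (hy : |y| ≤ 1) (hz : |z| ≤ 1) :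
    log |t * y - s * z| ≤ |t| + |s| :=
  calc log |t * y - s * z| ≤ |t * y - s * z| := log_le_self (abs_nonneg _)
    _ ≤ |t| * |y| + |s| * |z| := by simpa only [abs_mul] using abs_sub (t * y) (s * z)
    _ ≤ |t| + |s| := add_le_add (mul_le_of_le_one_right (abs_nonneg t) hy)
        (mul_le_of_le_one_right (abs_nonneg s) hz)

lemma ae_arcsineMeasure_prod_abs_le_one :
    ∀ᵐ q ∂arcsineMeasure.prod arcsineMeasure, |q.1| ≤ 1 ∧ |q.2| ≤ 1 :=
  (Measure.quasiMeasurePreserving_fst.ae ae_arcsineMeasure_abs_le_one).and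
    (Measure.quasiMeasurePreserving_snd.ae ae_arcsineMeasure_abs_le_one)

lemma log_energy_arcsineMeasure_of_abs_le {t s : ℝ} (ht : 0 < t) (hs : |s| ≤ t) :
    Integrable (fun q : ℝ × ℝ => log |s * q.1 - t * q.2|) (arcsineMeasure.prod arcsineMeasure) ∧
      ∫ q, log |s * q.1 - t * q.2| ∂arcsineMeasure.prod arcsineMeasure = log (t / 2) := by
  have hpot : ∀ᵐ x ∂arcsineMeasure, Integrable (fun y => log |s * x - t * y|) arcsineMeasure ∧
      ∫ y, log |s * x - t * y| ∂arcsineMeasure = log (t / 2) := by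
    filter_upwards [ae_arcsineMeasure_abs_le_one] with x hx
    refine log_potential_arcsineMeasure ht ?_
    rw [abs_mul]
    exact (mul_le_of_le_one_right (abs_nonneg s) hx).trans hs
  have hconst := hpot.mono fun x hx => hx.2
  have hint : Integrable (fun q : ℝ × ℝ => log |s * q.1 - t * q.2|)
      (arcsineMeasure.prod arcsineMeasure) :=
    integrable_prod_of_le (Measurable.aestronglyMeasurable (by fun_prop))
      (ae_arcsineMeasure_prod_abs_le_one.mono fun q hq => log_abs_mul_sub_mul_le hq.1 hq.2)
      (hpot.mono fun x hx => hx.1) ((integrable_const _).congr (EventuallyEq.symm hconst))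
  refine ⟨hint, ?_⟩
  rw [integral_prod _ hint, integral_congr_ae hconst, integral_const, probReal_univ, one_smul]

lemma log_energy_arcsineMeasure {t s : ℝ} (ht : 0 < t) (hs : 0 < s) :
    Integrable (fun q : ℝ × ℝ => log |t * q.1 - s * q.2|) (arcsineMeasure.prod arcsineMeasure) ∧
      ∫ q, log |t * q.1 - s * q.2| ∂arcsineMeasure.prod arcsineMeasure = log (max t s / 2) := by
  rcases le_total t s with hts | hst
  · rw [max_eq_right hts]
    exact log_energy_arcsineMeasure_of_abs_le hs ((abs_of_pos ht).trans_le hts)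
  · obtain ⟨hint, hval⟩ := log_energy_arcsineMeasure_of_abs_le ht ((abs_of_pos hs).trans_le hst)
    have hswap : (fun q : ℝ × ℝ => log |t * q.1 - s * q.2|) =
        (fun q => log |s * q.1 - t * q.2|) ∘ Prod.swap :=
      funext fun q => congrArg log (abs_sub_comm _ _)
    rw [max_eq_left hst, ← hval, hswap]
    exact ⟨hint.swap, integral_prod_swap fun q : ℝ × ℝ => log |s * q.1 - t * q.2|⟩

lemma log_energy_mconv_arcsineMeasure {μ ν : Measure ℝ} [IsFiniteMeasure μ] [IsFiniteMeasure ν]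
    {C : ℝ} (hμ : ∀ᵐ t ∂μ, t ∈ Ioc 0 C) (hν : ∀ᵐ s ∂ν, s ∈ Ioc 0 C)
    (hint : Integrable (fun r : ℝ × ℝ => log (max r.1 r.2 / 2)) (μ.prod ν)) :
    Integrable (fun q : ℝ × ℝ => log |q.1 - q.2|)
        ((μ ∗ₘ arcsineMeasure).prod (ν ∗ₘ arcsineMeasure)) ∧
      ∫ q, log |q.1 - q.2| ∂(μ ∗ₘ arcsineMeasure).prod (ν ∗ₘ arcsineMeasure) =
        ∫ r, log (max r.1 r.2 / 2) ∂μ.prod ν := by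
  have hradii : ∀ᵐ r ∂μ.prod ν, r.1 ∈ Ioc 0 C ∧ r.2 ∈ Ioc 0 C :=
    (Measure.quasiMeasurePreserving_fst.ae hμ).and (Measure.quasiMeasurePreserving_snd.ae hν)
  have henergy := hradii.mono fun r hr => log_energy_arcsineMeasure hr.1.1 hr.2.1
  have hvalue := henergy.mono fun r hr => hr.2
  have hbound : ∀ᵐ q ∂(μ.prod ν).prod (arcsineMeasure.prod arcsineMeasure),
      log |(q.1 * q.2).1 - (q.1 * q.2).2| ≤ C + C := by
    filter_upwards [Measure.quasiMeasurePreserving_fst.ae hradii,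
      Measure.quasiMeasurePreserving_snd.ae ae_arcsineMeasure_prod_abs_le_one] with q hr hq
    refine (log_abs_mul_sub_mul_le hq.1 hq.2).trans (add_le_add ?_ ?_)
    · exact (abs_of_pos hr.1.1).trans_le hr.1.2
    · exact (abs_of_pos hr.2.1).trans_le hr.2.2
  have hmeas : Measurable fun q : ℝ × ℝ => log |q.1 - q.2| := by fun_prop
  have hprod : Integrable (fun q : ℝ × ℝ => log |q.1 - q.2|)
      (μ.prod ν ∗ₘ arcsineMeasure.prod arcsineMeasure) := by
    refine (integrable_map_measure hmeas.aestronglyMeasurable (by fun_prop)).2 ?_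
    exact integrable_prod_of_le (Measurable.aestronglyMeasurable (by fun_prop)) hbound
      (henergy.mono fun r hr => hr.1) (hint.congr (EventuallyEq.symm hvalue))
  rw [prod_mconv_prod]
  exact ⟨hprod, (integral_mconv hprod).trans (integral_congr_ae hvalue)⟩

/-! ### The power law -/

/-- The law of `u ^ (1 / p)` for `u` uniform on `(0, 1]`. For `0 < p` this is the distribution on
`(0, 1]` with cumulative distribution function `t ^ p`. -/
noncomputable def powerMeasure (p : ℝ) : Measure ℝ :=
  (volume.restrict (Ioc 0 1)).map (· ^ p⁻¹)

instance isProbabilityMeasure_powerMeasure (p : ℝ) : IsProbabilityMeasure (powerMeasure p) :=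
  have : IsProbabilityMeasure (volume.restrict (Ioc (0 : ℝ) 1)) := ⟨by simp⟩
  Measure.isProbabilityMeasure_map (by fun_prop)

lemma ae_powerMeasure_mem_Ioc {p : ℝ} (hp : 0 ≤ p) : ∀ᵐ t ∂powerMeasure p, t ∈ Ioc 0 1 := by
  refine (ae_map_iff (by fun_prop) measurableSet_Ioc).2 ?_
  filter_upwards [ae_restrict_mem measurableSet_Ioc] with u hu
  exact ⟨rpow_pos_of_pos hu.1 _, rpow_le_one hu.1.le hu.2 (inv_nonneg.2 hp)⟩

lemma powerMeasure_apply_Iic {p : ℝ} (hp : 0 < p) (x : ℝ) :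
    powerMeasure p (Iic x) = ENNReal.ofReal (max 0 (min x 1) ^ p) := by
  set y := max 0 (min x 1) with hy
  have hy0 : 0 ≤ y := le_max_left _ _
  have hyp : y ^ p ≤ 1 := rpow_le_one hy0 (max_le zero_le_one (min_le_right _ _)) hp.le
  have hpre : (· ^ p⁻¹) ⁻¹' Iic x ∩ Ioc 0 1 = Ioc 0 (y ^ p) := by
    ext u
    have hiff (hu : 0 < u) (hu1 : u ≤ 1) : u ^ p⁻¹ ≤ x ↔ u ≤ y ^ p := by
      rw [← rpow_inv_le_iff_of_pos hu.le hy0 hp, hy, le_max_iff, le_min_iff,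
        or_iff_right (rpow_pos_of_pos hu _).not_ge,
        and_iff_left (rpow_le_one hu.le hu1 (inv_nonneg.2 hp.le))]
    simp only [mem_inter_iff, mem_preimage, mem_Iic, mem_Ioc]
    exact ⟨fun h => ⟨h.2.1, (hiff h.2.1 h.2.2).1 h.1⟩,
      fun h => ⟨(hiff h.1 (h.2.trans hyp)).2 h.2, h.1, h.2.trans hyp⟩⟩
  rw [powerMeasure, Measure.map_apply (by fun_prop) measurableSet_Iic,
    Measure.restrict_apply ((by fun_prop : Measurable (· ^ p⁻¹)) measurableSet_Iic), hpre,
    Real.volume_Ioc, sub_zero]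

lemma map_max_powerMeasure_prod {p q : ℝ} (hp : 0 < p) (hq : 0 < q) :
    ((powerMeasure p).prod (powerMeasure q)).map (fun r => max r.1 r.2) = powerMeasure (p + q) := by
  have hmax : Measurable fun r : ℝ × ℝ => max r.1 r.2 := by fun_prop
  have := Measure.isProbabilityMeasure_map (μ := (powerMeasure p).prod (powerMeasure q))
    hmax.aemeasurable
  refine Measure.ext_of_Iic _ _ fun x => ?_
  have hpre : (fun r : ℝ × ℝ => max r.1 r.2) ⁻¹' Iic x = Iic x ×ˢ Iic x :=
    ext fun _ => by simp only [mem_preimage, mem_Iic, mem_prod, max_le_iff]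
  have hy0 : 0 ≤ max 0 (min x 1) := le_max_left _ _
  rw [Measure.map_apply hmax measurableSet_Iic, hpre, Measure.prod_prod, powerMeasure_apply_Iic hp,
    powerMeasure_apply_Iic hq, powerMeasure_apply_Iic (add_pos hp hq),
    ← ENNReal.ofReal_mul (rpow_nonneg hy0 p), ← rpow_add_of_nonneg hy0 hp.le hq.le]

lemma log_rpow_inv_ae_eq (p : ℝ) :
    (fun u => p⁻¹ * log u) =ᵐ[volume.restrict (Ioc 0 1)] fun u => log (u ^ p⁻¹) := by
  filter_upwards [ae_restrict_mem measurableSet_Ioc] with u hu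
  exact (log_rpow hu.1 _).symm

lemma integrable_log_powerMeasure (p : ℝ) : Integrable log (powerMeasure p) := by
  have hlog : IntegrableOn log (Ioc 0 1) :=
    (intervalIntegrable_iff_integrableOn_Ioc_of_le zero_le_one).1
      intervalIntegral.intervalIntegrable_log'
  exact (integrable_map_measure measurable_log.aestronglyMeasurable (by fun_prop)).2
    ((hlog.const_mul p⁻¹).congr (log_rpow_inv_ae_eq p))

lemma integral_log_powerMeasure (p : ℝ) : ∫ t, log t ∂powerMeasure p = -p⁻¹ := by
  rw [powerMeasure, integral_map (by fun_prop) measurable_log.aestronglyMeasurable,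
    ← integral_congr_ae (log_rpow_inv_ae_eq p), integral_const_mul,
    ← intervalIntegral.integral_of_le zero_le_one, integral_log]
  simp

lemma log_max_div_two_powerMeasure {p q : ℝ} (hp : 0 < p) (hq : 0 < q) :
    Integrable (fun r : ℝ × ℝ => log (max r.1 r.2 / 2)) ((powerMeasure p).prod (powerMeasure q)) ∧
      ∫ r, log (max r.1 r.2 / 2) ∂(powerMeasure p).prod (powerMeasure q) =
        -log 2 - (p + q)⁻¹ := by
  have hint := integrable_log_powerMeasure (p + q)
  have hlog : (fun m => log m - log 2) =ᵐ[powerMeasure (p + q)] fun m => log (m / 2) := by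
    filter_upwards [ae_powerMeasure_mem_Ioc (add_pos hp hq).le] with m hm
    exact (log_div hm.1.ne' two_ne_zero).symm
  have hsingle : Integrable (fun m => log (m / 2)) (powerMeasure (p + q)) ∧
      ∫ m, log (m / 2) ∂powerMeasure (p + q) = -log 2 - (p + q)⁻¹ := by
    refine ⟨(hint.sub (integrable_const _)).congr hlog, ?_⟩
    rw [← integral_congr_ae hlog, integral_sub hint (integrable_const _), integral_log_powerMeasure,
      integral_const, probReal_univ, one_smul, neg_sub_comm]
  have hmax : AEMeasurable (fun r : ℝ × ℝ => max r.1 r.2)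
    ((powerMeasure p).prod (powerMeasure q)) := by fun_prop
  rwa [← map_max_powerMeasure_prod hp hq, integrable_map_measure
    (Measurable.aestronglyMeasurable (by fun_prop)) hmax,
    integral_map hmax (Measurable.aestronglyMeasurable (by fun_prop))] at hsingle

lemma integral_powerMeasure {p : ℝ} (hp : 0 < p) {f : ℝ → ℝ} (hf : Measurable f) :
    ∫ t, f t ∂powerMeasure p = ∫ t in Ioc 0 1, p * t ^ (p - 1) * f t := by
  have hind (g : ℝ → ℝ) : ∫ u in Ioi 0, (Ioc 0 1).indicator g u = ∫ u in Ioc 0 1, g u := by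
    rw [setIntegral_indicator measurableSet_Ioc, inter_eq_right.2 Ioc_subset_Ioi_self]
  rw [powerMeasure, integral_map (by fun_prop) hf.aestronglyMeasurable, ← hind, ← hind,
    ← integral_comp_rpow_Ioi_of_pos hp]
  refine setIntegral_congr_fun measurableSet_Ioi fun t (ht : 0 < t) => ?_
  have hmem : t ^ p ∈ Ioc 0 1 ↔ t ∈ Ioc 0 1 := by
    simp [ht, rpow_pos_of_pos, rpow_le_one_iff_of_pos, hp.le, hp.not_ge]
  by_cases h : t ∈ Ioc 0 1
  · simp only [smul_eq_mul]
    rw [indicator_of_mem (hmem.2 h), indicator_of_mem h, rpow_rpow_inv ht.le hp.ne']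
  · simp only [smul_eq_mul]
    rw [indicator_of_notMem (mt hmem.1 h), indicator_of_notMem h, mul_zero]

/-! ### Densities of scale mixtures of the arcsine law -/

/-- The density of the arcsine law dilated by `t > 0`. No case distinction is needed: for
`|t| ≤ |x|` the square root of a nonpositive number and the inverse of `0` are both `0`. -/
noncomputable def arcsinePDFReal (t x : ℝ) : ℝ :=
  (π * √(t ^ 2 - x ^ 2))⁻¹

lemma arcsinePDFReal_nonneg (t x : ℝ) : 0 ≤ arcsinePDFReal t x := by
  rw [arcsinePDFReal]
  positivity

lemma arcsinePDFReal_eq_zero {t x : ℝ} (h : |t| ≤ |x|) : arcsinePDFReal t x = 0 := by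
  rw [arcsinePDFReal, sqrt_eq_zero_of_nonpos (sub_nonpos.2 (sq_le_sq.2 h)), mul_zero, inv_zero]

@[fun_prop]
lemma measurable_arcsinePDFReal {α : Type*} [MeasurableSpace α] {f g : α → ℝ} (hf : Measurable f)
    (hg : Measurable g) : Measurable fun a => arcsinePDFReal (f a) (g a) := by
  unfold arcsinePDFReal
  fun_prop

lemma mul_sin_mul_arcsinePDFReal {t θ : ℝ} (ht : 0 < t) (hθ : θ ∈ Ioo 0 π) :
    t * sin θ * arcsinePDFReal t (t * cos θ) = π⁻¹ := by
  have hsin : 0 < t * sin θ := mul_pos ht (sin_pos_of_mem_Ioo hθ)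
  have hsq : t ^ 2 - (t * cos θ) ^ 2 = (t * sin θ) ^ 2 := by
    rw [mul_pow, mul_pow, sin_sq]
    ring
  rw [arcsinePDFReal, hsq, sqrt_sq hsin.le, mul_inv_rev, mul_inv_cancel_left₀ hsin.ne']

lemma image_mul_cos_Icc {t : ℝ} (ht : 0 ≤ t) : (fun θ => t * cos θ) '' Icc 0 π = Icc (-t) t := by
  rw [← image_image (t * ·) cos, bijOn_cos.image_eq, image_mul_left_Icc ht (by norm_num), mul_neg,
    mul_one]

lemma lintegral_mul_arcsineMeasure {t : ℝ} (ht : 0 < t) {f : ℝ → ℝ≥0∞} (hf : Measurable f) :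
    ∫⁻ y, f (t * y) ∂arcsineMeasure = ∫⁻ x, ENNReal.ofReal (arcsinePDFReal t x) * f x := by
  have hanti : AntitoneOn (fun θ => t * cos θ) (Icc 0 π) :=
    fun _ hx _ hy hxy => mul_le_mul_of_nonneg_left (antitoneOn_cos hx hy hxy) ht.le
  have hderiv (θ : ℝ) : HasDerivWithinAt (fun θ => t * cos θ) (-(t * sin θ)) (Icc 0 π) θ := by
    simpa only [mul_neg] using ((hasDerivAt_cos θ).const_mul t).hasDerivWithinAt
  have hvanish : ∀ x ∉ Icc (-t) t, ENNReal.ofReal (arcsinePDFReal t x) * f x = 0 := by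
    intro x hx
    rw [arcsinePDFReal_eq_zero, ENNReal.ofReal_zero, zero_mul]
    exact (abs_of_pos ht).trans_le (not_le.1 (mt abs_le.1 hx)).le
  symm
  calc ∫⁻ x, ENNReal.ofReal (arcsinePDFReal t x) * f x
      = ∫⁻ x in (fun θ => t * cos θ) '' Icc 0 π, ENNReal.ofReal (arcsinePDFReal t x) * f x := by
        rw [image_mul_cos_Icc ht.le,
          setLIntegral_eq_of_support_subset (Function.support_subset_iff'.2 hvanish)]
    _ = ∫⁻ θ in Icc 0 π, ENNReal.ofReal (t * sin θ) *
          (ENNReal.ofReal (arcsinePDFReal t (t * cos θ)) * f (t * cos θ)) := by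
        rw [lintegral_image_eq_lintegral_deriv_mul_of_antitoneOn measurableSet_Icc
          (fun θ _ => hderiv θ) hanti]
        simp only [neg_neg]
    _ = ∫⁻ θ in Ioo 0 π, ENNReal.ofReal π⁻¹ * f (t * cos θ) := by
        rw [← setLIntegral_congr Ioo_ae_eq_Icc]
        refine setLIntegral_congr_fun measurableSet_Ioo fun θ hθ => ?_
        rw [← mul_assoc, ← ENNReal.ofReal_mul
          (mul_nonneg ht.le (sin_pos_of_mem_Ioo hθ).le), mul_sin_mul_arcsinePDFReal ht hθ]
    _ = ∫⁻ y, f (t * y) ∂arcsineMeasure := by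
        rw [setLIntegral_congr Ioo_ae_eq_Ioc, lintegral_const_mul _ (by fun_prop), arcsineMeasure,
          lintegral_smul_measure, lintegral_map (by fun_prop) (by fun_prop), smul_eq_mul]

lemma mconv_arcsineMeasure_eq_withDensity_lintegral {μ : Measure ℝ} [SFinite μ]
    (hμ : ∀ᵐ t ∂μ, 0 < t) :
    μ ∗ₘ arcsineMeasure =
      volume.withDensity fun x => ∫⁻ t, ENNReal.ofReal (arcsinePDFReal t x) ∂μ := by
  have hpdf : Measurable fun q : ℝ × ℝ => ENNReal.ofReal (arcsinePDFReal q.1 q.2) := by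
    fun_prop
  refine Measure.ext_of_lintegral _ fun f hf => ?_
  calc ∫⁻ z, f z ∂μ ∗ₘ arcsineMeasure
      = ∫⁻ t, (∫⁻ x, ENNReal.ofReal (arcsinePDFReal t x) * f x) ∂μ := by
        rw [Measure.lintegral_mconv hf]
        exact lintegral_congr_ae (hμ.mono fun t ht => lintegral_mul_arcsineMeasure ht hf)
    _ = ∫⁻ x, ∫⁻ t, ENNReal.ofReal (arcsinePDFReal t x) * f x ∂μ :=
        lintegral_lintegral_swap (by fun_prop)
    _ = ∫⁻ x, (∫⁻ t, ENNReal.ofReal (arcsinePDFReal t x) ∂μ) * f x :=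
        lintegral_congr fun x => lintegral_mul_const _ (by fun_prop)
    _ = _ := (lintegral_withDensity_eq_lintegral_mul _ hpdf.lintegral_prod_left' hf).symm

lemma mconv_arcsineMeasure_eq_withDensity {μ : Measure ℝ} [IsFiniteMeasure μ]
    (hμ : ∀ᵐ t ∂μ, 0 < t) :
    μ ∗ₘ arcsineMeasure =
      volume.withDensity fun x => ENNReal.ofReal (∫ t, arcsinePDFReal t x ∂μ) := by
  have hpdf : Measurable fun q : ℝ × ℝ => ENNReal.ofReal (arcsinePDFReal q.1 q.2) := by
    fun_prop
  -- Where the inner integral is infinite the Bochner integral is `0`, but this is a null set.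
  have hfinite : ∀ᵐ x : ℝ, ∫⁻ t, ENNReal.ofReal (arcsinePDFReal t x) ∂μ < ∞ := by
    refine ae_lt_top hpdf.lintegral_prod_left' ?_
    rw [← setLIntegral_univ, ← withDensity_apply _ .univ,
      ← mconv_arcsineMeasure_eq_withDensity_lintegral hμ]
    exact measure_ne_top _ _
  rw [mconv_arcsineMeasure_eq_withDensity_lintegral hμ]
  refine withDensity_congr_ae (hfinite.mono fun x hx => ?_)
  beta_reduce
  rw [integral_eq_lintegral_of_nonneg_ae (ae_of_all _ fun t => arcsinePDFReal_nonneg t x)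
    (Measurable.aestronglyMeasurable (by fun_prop)),
    ENNReal.ofReal_toReal hx.ne]

/-! ### The Ullman law -/

lemma ullmanDensity_eq_integral {p : ℝ} (hp : 0 < p) (x : ℝ) :
    ullmanDensity p x = ∫ t, arcsinePDFReal t x ∂powerMeasure p := by
  rw [integral_powerMeasure hp (by fun_prop)]
  have hvanish : ∀ t ∈ Ioc 0 1 \ Ioc |x| 1, p * t ^ (p - 1) * arcsinePDFReal t x = 0 := by
    rintro t ⟨ht, htx⟩
    rw [arcsinePDFReal_eq_zero, mul_zero]
    exact (abs_of_pos ht.1).trans_le (not_lt.1 fun h => htx ⟨h, ht.2⟩)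
  rw [setIntegral_eq_of_subset_of_forall_sdiff_eq_zero measurableSet_Ioc
    (Ioc_subset_Ioc_left (abs_nonneg x)) hvanish, ullmanDensity, ← integral_const_mul]
  split_ifs with hx
  · refine integral_congr_ae (ae_of_all _ fun t => ?_)
    simp only [arcsinePDFReal]
    ring
  · rw [Ioc_eq_empty (not_lt.2 (not_le.1 hx).le), setIntegral_empty]

lemma ullmanDensity_nonneg {p : ℝ} (hp : 0 < p) (x : ℝ) : 0 ≤ ullmanDensity p x := by
  rw [ullmanDensity_eq_integral hp]
  exact integral_nonneg fun t => arcsinePDFReal_nonneg t x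

lemma measurable_ullmanDensity {p : ℝ} (hp : 0 < p) : Measurable (ullmanDensity p) := by
  rw [funext (ullmanDensity_eq_integral hp)]
  exact (StronglyMeasurable.integral_prod_left' (f := fun q : ℝ × ℝ => arcsinePDFReal q.1 q.2)
    (Measurable.stronglyMeasurable (by fun_prop))).measurable

lemma ullmanMeasure_eq_mconv {p : ℝ} (hp : 0 < p) :
    ullmanMeasure p = powerMeasure p ∗ₘ arcsineMeasure := by
  simp only [ullmanMeasure, ullmanDensity_eq_integral hp]
  exact (mconv_arcsineMeasure_eq_withDensity
    ((ae_powerMeasure_mem_Ioc hp.le).mono fun t ht => ht.1)).symm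

lemma isProbabilityMeasure_ullmanMeasure {p : ℝ} (hp : 0 < p) :
    IsProbabilityMeasure (ullmanMeasure p) := by
  rw [ullmanMeasure_eq_mconv hp]
  infer_instance

lemma integral_ullmanMeasure {p : ℝ} (hp : 0 < p) (g : ℝ → ℝ) :
    ∫ x, g x ∂ullmanMeasure p = ∫ x in (-1 : ℝ)..1, ullmanDensity p x * g x := by
  rw [ullmanMeasure, integral_withDensity_eq_integral_toReal_smul
    (measurable_ullmanDensity hp).ennreal_ofReal (ae_of_all _ fun _ => ENNReal.ofReal_lt_top),
    intervalIntegral.integral_of_le (by norm_num), ← integral_Icc_eq_integral_Ioc]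
  simp only [ENNReal.toReal_ofReal (ullmanDensity_nonneg hp _), smul_eq_mul]
  refine (setIntegral_eq_integral_of_forall_compl_eq_zero fun x hx => ?_).symm
  rw [ullmanDensity, if_neg (mt abs_le.1 hx), zero_mul]

lemma log_energy_ullmanMeasure {p q : ℝ} (hp : 0 < p) (hq : 0 < q) :
    Integrable (fun r : ℝ × ℝ => log |r.1 - r.2|) ((ullmanMeasure p).prod (ullmanMeasure q)) ∧
      ∫ r, log |r.1 - r.2| ∂(ullmanMeasure p).prod (ullmanMeasure q) =
        -log 2 - (p + q)⁻¹ := by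
  obtain ⟨hint, hval⟩ := log_max_div_two_powerMeasure hp hq
  rw [ullmanMeasure_eq_mconv hp, ullmanMeasure_eq_mconv hq, ← hval]
  exact log_energy_mconv_arcsineMeasure (ae_powerMeasure_mem_Ioc hp.le)
    (ae_powerMeasure_mem_Ioc hq.le) hint

theorem ullman_log_energy_general {p q : ℝ} (hp : 0 < p) (hq : 0 < q) {Ω : Type*}
    [MeasurableSpace Ω] {P : Measure Ω} {U V : Ω → ℝ} (hU : HasLaw U (ullmanMeasure p) P)
    (hV : HasLaw V (ullmanMeasure q) P) (hUV : IndepFun U V P) :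
    (∫ ω, log |U ω - V ω| ∂P) =
        (∫ x in (-1 : ℝ)..1, ∫ y in (-1 : ℝ)..1,
          ullmanDensity p x * ullmanDensity q y * log |x - y|) ∧
      (∫ x in (-1 : ℝ)..1, ∫ y in (-1 : ℝ)..1,
          ullmanDensity p x * ullmanDensity q y * log |x - y|) =
        -log 2 - 1 / (p + q) := by
  have := isProbabilityMeasure_ullmanMeasure hp
  have := isProbabilityMeasure_ullmanMeasure hq
  have := hU.isProbabilityMeasure
  obtain ⟨hint, hval⟩ := log_energy_ullmanMeasure hp hq
  have hiter : (∫ x in (-1 : ℝ)..1, ∫ y in (-1 : ℝ)..1,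
      ullmanDensity p x * ullmanDensity q y * log |x - y|) =
      ∫ r, log |r.1 - r.2| ∂(ullmanMeasure p).prod (ullmanMeasure q) := by
    rw [integral_prod _ hint, integral_ullmanMeasure hp]
    simp only [integral_ullmanMeasure hq, mul_assoc, intervalIntegral.integral_const_mul]
  have hexp : (∫ ω, log |U ω - V ω| ∂P) =
      ∫ r, log |r.1 - r.2| ∂(ullmanMeasure p).prod (ullmanMeasure q) :=
    (hUV.hasLaw_prod hU hV).integral_comp (f := fun r : ℝ × ℝ => log |r.1 - r.2|)
      hint.aestronglyMeasurable
  exact ⟨hexp.trans hiter.symm, by rw [hiter, hval, one_div]⟩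

end

/-- Let `0 < p < ∞` and let `U`, `V` be independent random variables, each with the Ullman
distribution with parameter `p`. Then
`E log|U-V| = ∫_{-1}^1 ∫_{-1}^1 h_p(x) h_p(y) log|x-y| dx dy = -log 2 - 1/(2p)`. -/
theorem ullman_log_energy (p : ℝ) (hp : 0 < p) {Ω : Type*} [MeasureSpace Ω]
    [IsProbabilityMeasure (volume : Measure Ω)] (U V : Ω → ℝ)
    (hU : Measurable U) (hV : Measurable V)
    (hUlaw : Measure.map U volume = ullmanMeasure p)
    (hVlaw : Measure.map V volume = ullmanMeasure p)
    (hindep : ProbabilityTheory.IndepFun U V) :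
    (∫ ω, Real.log |U ω - V ω|) =
        (∫ x in (-1 : ℝ)..1, ∫ y in (-1 : ℝ)..1,
          ullmanDensity p x * ullmanDensity p y * Real.log |x - y|) ∧
      (∫ x in (-1 : ℝ)..1, ∫ y in (-1 : ℝ)..1,
          ullmanDensity p x * ullmanDensity p y * Real.log |x - y|) =
        -Real.log 2 - 1 / (2 * p) := by
  simpa only [two_mul] using
    ullman_log_energy_general hp hp ⟨hU.aemeasurable, hUlaw⟩ ⟨hV.aemeasurable, hVlaw⟩ hindep
end
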